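/- For every 0 ≤ t ≤ T: ∫₀^∞ Φ(v(t, ξ), V(t, ξ)) dξ + ‖ψ_ξ(t)‖² + ∫₀^t ∫₀^∞ (ψ_ξξ²/v) dξ dτ ≲ ∫₀^∞ Φ(v(0, ξ), V(0, ξ)) dξ + ‖ψ₀′‖² + e^{−c_−β} + δ²m^{γ+2} ∫₀^t ∫₀^∞ φ_ξ² dξ dτ. -/

import Mathlib

open MeasureTheory Real Filter

/-- Partial derivative in the first (time) variable. -/
noncomputable def pt (f : ℝ → ℝ → ℝ) (t ξ : ℝ) : ℝ := deriv (fun τ => f τ ξ) t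

/-- Partial derivative in the second (space) variable. -/
noncomputable def px (f : ℝ → ℝ → ℝ) (t ξ : ℝ) : ℝ := deriv (fun y => f t y) ξ

/-- `Φ(a, b) = p(b)(a − b) − ∫_b^a p(η) dη` with `p(v) = v^(−γ)`. -/
noncomputable def Phi (γ a b : ℝ) : ℝ := b ^ (-γ) * (a - b) - ∫ η in b..a, η ^ (-γ)

/-- Square of the `L²` norm on the half line. -/
noncomputable def nsq (f : ℝ → ℝ) : ℝ := ∫ ξ in Set.Ioi (0:ℝ), (f ξ) ^ 2

/-- The setting of the inflow problem for the compressible Navier–Stokes equations,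
reformulated around the (shifted) 2-viscous shock wave profile `(V, U)`. -/
structure NSSetting (γ μ vm vp C₀ K : ℝ) where
  um : ℝ
  up : ℝ
  s : ℝ
  δ : ℝ
  cp : ℝ
  cm : ℝ
  sm : ℝ
  β : ℝ
  σ : ℝ
  T : ℝ
  m : ℝ
  M : ℝ
  N : ℝ
  V : ℝ → ℝ
  U : ℝ → ℝ
  φ : ℝ → ℝ → ℝ
  ψ : ℝ → ℝ → ℝ
  humpos : 0 < um
  hu : up < um
  hspos : 0 < s
  rh1 : s * (vp - vm) = um - up
  rh2 : s * (up - um) = vp ^ (-γ) - vm ^ (-γ)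
  hδ : δ = vp - vm
  subsonic : um < Real.sqrt γ * vm ^ (-(γ - 1) / 2)
  hsm : sm = -(um / vm)
  hVC2 : ContDiff ℝ 2 V
  hUC2 : ContDiff ℝ 2 U
  hUVp : ∀ ξ, U ξ - up = -(s * (V ξ - vp))
  hUVm : ∀ ξ, U ξ - um = -(s * (V ξ - vm))
  hODE : ∀ ξ, s * μ * deriv V ξ / V ξ = -(s ^ 2 * (V ξ - vm)) - (V ξ ^ (-γ) - vm ^ (-γ))
  hVrange : ∀ ξ, vm < V ξ ∧ V ξ < vp
  hV'pos : ∀ ξ, 0 < deriv V ξ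
  hcp : cp = vp * |(-(γ * vp ^ (-γ - 1))) + s ^ 2| / (s * μ)
  hcm : cm = vm * |(-(γ * vm ^ (-γ - 1))) + s ^ 2| / (s * μ)
  decayp : ∀ ξ : ℝ, 0 ≤ ξ →
    |V ξ - vp| + |U ξ - up| ≤ C₀ * δ * Real.exp (-(cp * ξ)) ∧
    |deriv V ξ| + |deriv U ξ| ≤ C₀ * δ ^ 2 * Real.exp (-(cp * ξ))
  decaym : ∀ ξ : ℝ, ξ ≤ 0 →
    |V ξ - vm| + |U ξ - um| ≤ C₀ * δ * Real.exp (cm * ξ) ∧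
    |deriv V ξ| + |deriv U ξ| ≤ C₀ * δ ^ 2 * Real.exp (cm * ξ)
  hKcp : cp ≤ K * δ ∧ δ ≤ K * cp
  hKcm : cm ≤ K * δ ∧ δ ≤ K * cm
  hβpos : 0 < β
  hβσ : |σ| ≤ β
  hσδ : δ * |σ| ≤ K
  hTpos : 0 < T
  hφsm : ContDiff ℝ (⊤ : ℕ∞) (Function.uncurry φ)
  hψsm : ContDiff ℝ (⊤ : ℕ∞) (Function.uncurry ψ)
  eq1 : ∀ t ξ : ℝ, 0 ≤ t → t ≤ T → 0 ≤ ξ →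
    pt φ t ξ - sm * px φ t ξ - px ψ t ξ = 0
  eq2 : ∀ t ξ : ℝ, 0 ≤ t → t ≤ T → 0 ≤ ξ →
    pt ψ t ξ - sm * px ψ t ξ +
        ((V (ξ - (s - sm) * t + σ - β) + px φ t ξ) ^ (-γ) -
          V (ξ - (s - sm) * t + σ - β) ^ (-γ)) =
      μ * ((deriv U (ξ - (s - sm) * t + σ - β) + px (px ψ) t ξ) /
            (V (ξ - (s - sm) * t + σ - β) + px φ t ξ) -
          deriv U (ξ - (s - sm) * t + σ - β) / V (ξ - (s - sm) * t + σ - β))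
  bdφ : ∀ t : ℝ, 0 ≤ t → t ≤ T →
    φ t 0 = -((s - sm) * ∫ τ in Set.Ioi t, (V (-((s - sm) * τ) + σ - β) - vm))
  bdφx : ∀ t : ℝ, 0 ≤ t → t ≤ T → px φ t 0 = vm - V (-((s - sm) * t) + σ - β)
  bdψx : ∀ t : ℝ, 0 ≤ t → t ≤ T → px ψ t 0 = um - U (-((s - sm) * t) + σ - β)
  hInt : ∀ t : ℝ, 0 ≤ t → t ≤ T →
    Integrable (fun ξ => (φ t ξ) ^ 2 + (ψ t ξ) ^ 2 + (px φ t ξ) ^ 2 + (px ψ t ξ) ^ 2 +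
      (px (px φ) t ξ) ^ 2 + (px (px ψ) t ξ) ^ 2 + (px (px (px ψ)) t ξ) ^ 2)
      (volume.restrict (Set.Ioi 0))
  hVanish : ∀ t : ℝ, 0 ≤ t → t ≤ T →
    Tendsto (fun ξ => |φ t ξ| + |ψ t ξ| + |px φ t ξ| + |px ψ t ξ| +
      |px (px φ) t ξ| + |px (px ψ) t ξ|) atTop (nhds 0)
  hm1 : 1 ≤ m
  hM1 : 1 ≤ M
  hvbounds : ∀ t ξ : ℝ, 0 ≤ t → t ≤ T → 0 ≤ ξ →
    1 / m ≤ V (ξ - (s - sm) * t + σ - β) + px φ t ξ ∧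
      V (ξ - (s - sm) * t + σ - β) + px φ t ξ ≤ M
  hN0 : 0 ≤ N
  hN1 : N ≤ 1
  hNbound : ∀ t ξ : ℝ, 0 ≤ t → t ≤ T → 0 ≤ ξ → |φ t ξ| + |ψ t ξ| ≤ N

namespace NSSetting

variable {γ μ vm vp C₀ K : ℝ}

/-- The shifted argument `ξ − (s − sm)t + σ − β`. -/
noncomputable def sh (S : NSSetting γ μ vm vp C₀ K) (t ξ : ℝ) : ℝ :=
  ξ - (S.s - S.sm) * t + S.σ - S.β

/-- The specific volume `v = V + φ_ξ`. -/
noncomputable def vv (S : NSSetting γ μ vm vp C₀ K) (t ξ : ℝ) : ℝ :=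
  S.V (S.sh t ξ) + px S.φ t ξ

/-- `ṽ = v / V`. -/
noncomputable def tv (S : NSSetting γ μ vm vp C₀ K) (t ξ : ℝ) : ℝ :=
  S.vv t ξ / S.V (S.sh t ξ)

/-- `ṽ_ξ / ṽ`. -/
noncomputable def tvr (S : NSSetting γ μ vm vp C₀ K) (t ξ : ℝ) : ℝ :=
  px S.tv t ξ / S.tv t ξ

/-- `E₀ = ‖φ₀‖² + ‖ψ₀‖² + ‖ψ₀′‖² + ∫ Φ(v(0), V(0))`. -/
noncomputable def E₀ (S : NSSetting γ μ vm vp C₀ K) : ℝ :=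
  nsq (S.φ 0) + nsq (S.ψ 0) + nsq (px S.ψ 0) +
    ∫ ξ in Set.Ioi (0:ℝ), Phi γ (S.vv 0 ξ) (S.V (S.sh 0 ξ))

/-- The boundary smallness quantity `δ⁻¹ e^(−c₋ β)`. -/
noncomputable def Xq (S : NSSetting γ μ vm vp C₀ K) : ℝ :=
  S.δ⁻¹ * Real.exp (-(S.cm * S.β))

end NSSetting

/-!
The relative energy `Φ(v, V) + ψ_ξ² / 2` satisfies a balance law `∂ₜ(energy) = ∂_ξ(flux) + source`,
whose source is at most `-(μ / 2) ψ_ξξ² / v` plus a multiple of `δ² m^(γ + 2) φ_ξ²`, because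
`0 < V′ ≤ C₀ δ²`. As nothing is known about the decay of the flux at infinity, the law is tested
against the cutoff `(1 - ξ / R)⁴`. The flux is `≲ |ψ_ξ| (|φ_ξ| + |ψ_ξξ|)`; since `ψ` is
bounded, integrating by parts in `∫ ψ_ξ²` interpolates `ψ_ξ` between `ψ` and `ψ_ξξ`, so the cutoff
error is absorbed by the dissipation up to `O(R⁻²)`. Grönwall's inequality then makes `‖φ_ξ‖²`
integrable in time, which allows `R → ∞`. On the boundary `v = v₋`, so the flux there is controlled
by the tail of the shock, of size `e^(-c₋ β)`; its term in `ψ_t` is integrated by parts in time,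
using `|ψ| ≤ 1`.
-/

section PartialDerivatives

variable {F : ℝ → ℝ → ℝ} {t ξ : ℝ} {z : ℝ × ℝ} {k n : WithTop ℕ∞}

lemma hasDerivAt_px (hF : DifferentiableAt ℝ (Function.uncurry F) (t, ξ)) :
    HasDerivAt (F t) (px F t ξ) ξ :=
  (hF.comp ξ (f := fun y => (t, y)) (by fun_prop)).hasDerivAt

lemma hasDerivAt_pt (hF : DifferentiableAt ℝ (Function.uncurry F) (t, ξ)) :
    HasDerivAt (fun τ => F τ ξ) (pt F t ξ) t :=
  (hF.comp t (f := fun τ => (τ, ξ)) (by fun_prop)).hasDerivAt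

lemma px_eq_fderiv (hF : DifferentiableAt ℝ (Function.uncurry F) z) :
    px F z.1 z.2 = fderiv ℝ (Function.uncurry F) z (0, 1) :=
  (HasFDerivAt.comp_hasDerivAt (f := fun y => (z.1, y)) z.2 hF.hasFDerivAt
    ((hasDerivAt_const z.2 z.1).prodMk (hasDerivAt_id z.2))).deriv

lemma pt_eq_fderiv (hF : DifferentiableAt ℝ (Function.uncurry F) z) :
    pt F z.1 z.2 = fderiv ℝ (Function.uncurry F) z (1, 0) :=
  (HasFDerivAt.comp_hasDerivAt (f := fun τ => (τ, z.2)) z.1 hF.hasFDerivAt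
    ((hasDerivAt_id z.1).prodMk (hasDerivAt_const z.1 z.2))).deriv

lemma contDiffAt_px (hF : ContDiffAt ℝ n (Function.uncurry F) z) (hkn : k + 1 ≤ n) :
    ContDiffAt ℝ k (Function.uncurry (px F)) z := by
  refine ((hF.fderiv_right hkn).clm_apply (contDiffAt_const (c := ((0 : ℝ), (1 : ℝ))))
    ).congr_of_eventuallyEq ?_
  filter_upwards [(hF.of_le (le_add_self.trans hkn)).eventually (by simp)] with y hy
  exact px_eq_fderiv (hy.differentiableAt one_ne_zero)

lemma contDiffAt_pt (hF : ContDiffAt ℝ n (Function.uncurry F) z) (hkn : k + 1 ≤ n) :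
    ContDiffAt ℝ k (Function.uncurry (pt F)) z := by
  refine ((hF.fderiv_right hkn).clm_apply (contDiffAt_const (c := ((1 : ℝ), (0 : ℝ))))
    ).congr_of_eventuallyEq ?_
  filter_upwards [(hF.of_le (le_add_self.trans hkn)).eventually (by simp)] with y hy
  exact pt_eq_fderiv (hy.differentiableAt one_ne_zero)

lemma contDiff_px_of_smooth (hF : ContDiff ℝ (⊤ : ℕ∞) (Function.uncurry F)) :
    ContDiff ℝ (⊤ : ℕ∞) (Function.uncurry (px F)) :=
  contDiff_iff_contDiffAt.2 fun _ => contDiffAt_px hF.contDiffAt (by simp)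

lemma contDiff_pt_of_smooth (hF : ContDiff ℝ (⊤ : ℕ∞) (Function.uncurry F)) :
    ContDiff ℝ (⊤ : ℕ∞) (Function.uncurry (pt F)) :=
  contDiff_iff_contDiffAt.2 fun _ => contDiffAt_pt hF.contDiffAt (by simp)

lemma px_pt_comm (hF : ContDiff ℝ 2 (Function.uncurry F)) (t ξ : ℝ) :
    px (pt F) t ξ = pt (px F) t ξ := by
  have hdiff := hF.differentiable two_ne_zero
  have hpx : Function.uncurry (px F) = fun z => fderiv ℝ (Function.uncurry F) z (0, 1) :=
    funext fun z => px_eq_fderiv hdiff.differentiableAt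
  have hpt : Function.uncurry (pt F) = fun z => fderiv ℝ (Function.uncurry F) z (1, 0) :=
    funext fun z => pt_eq_fderiv hdiff.differentiableAt
  have hfderiv : DifferentiableAt ℝ (fderiv ℝ (Function.uncurry F)) (t, ξ) :=
    (hF.fderiv_right (m := 1) (by norm_num)).differentiable one_ne_zero _
  have hsymm : IsSymmSndFDerivAt ℝ (Function.uncurry F) (t, ξ) :=
    hF.contDiffAt.isSymmSndFDerivAt (by simp)
  rw [px_eq_fderiv (z := (t, ξ)) (by rw [hpt]; fun_prop),
    pt_eq_fderiv (z := (t, ξ)) (by rw [hpx]; fun_prop), hpx, hpt,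
    fderiv_clm_apply hfderiv (by fun_prop), fderiv_clm_apply hfderiv (by fun_prop)]
  simpa using hsymm.eq (0, 1) (1, 0)

end PartialDerivatives

section RelativeEntropy

variable {γ r a b x y l B : ℝ}

lemma rpow_neg_tangent_le (ha : 0 < a) (hb : 0 < b) (hr : 0 ≤ r) :
    b ^ (-r) - r * b ^ (-r - 1) * (a - b) ≤ a ^ (-r) := by
  have hexp : 1 - r * (a / b - 1) ≤ (a / b) ^ (-r) := by
    rw [rpow_def_of_pos (by positivity)]
    nlinarith [add_one_le_exp (log (a / b) * -r), log_le_sub_one_of_pos (div_pos ha hb)]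
  calc b ^ (-r) - r * b ^ (-r - 1) * (a - b) = b ^ (-r) * (1 - r * (a / b - 1)) := by
        rw [rpow_sub_one hb.ne']; field_simp
    _ ≤ b ^ (-r) * (a / b) ^ (-r) := by gcongr
    _ = a ^ (-r) := by rw [← mul_rpow hb.le (by positivity), mul_div_cancel₀ a hb.ne']

lemma rpow_neg_sub_le (hl : 0 < l) (hx : l ≤ x) (hxy : x ≤ y) (hr : 0 ≤ r) :
    x ^ (-r) - y ^ (-r) ≤ r * l ^ (-r - 1) * (y - x) := by
  have hx0 := hl.trans_le hx
  have hpow : x ^ (-r - 1) ≤ l ^ (-r - 1) := rpow_le_rpow_of_nonpos hl hx (by linarith)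
  calc x ^ (-r) - y ^ (-r) ≤ r * x ^ (-r - 1) * (y - x) := by
        linarith [rpow_neg_tangent_le (hx0.trans_le hxy) hx0 hr]
    _ ≤ r * l ^ (-r - 1) * (y - x) := by gcongr

lemma le_rpow_neg_sub (hx : 0 < x) (hxy : x ≤ y) (hy : y ≤ B) (hr : 0 ≤ r) :
    r * B ^ (-r - 1) * (y - x) ≤ x ^ (-r) - y ^ (-r) := by
  have hy0 := hx.trans_le hxy
  have hpow : B ^ (-r - 1) ≤ y ^ (-r - 1) := rpow_le_rpow_of_nonpos hy0 hy (by linarith)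
  calc r * B ^ (-r - 1) * (y - x) ≤ r * y ^ (-r - 1) * (y - x) := by gcongr
    _ ≤ x ^ (-r) - y ^ (-r) := by linarith [rpow_neg_tangent_le hx hy0 hr]

lemma abs_rpow_neg_sub_le (hl : 0 < l) (hx : l ≤ x) (hy : l ≤ y) (hr : 0 ≤ r) :
    |x ^ (-r) - y ^ (-r)| ≤ r * l ^ (-r - 1) * |x - y| := by
  wlog h : x ≤ y generalizing x y
  · rw [abs_sub_comm, abs_sub_comm x y]
    exact this hy hx (le_of_not_ge h)
  rw [abs_of_nonneg (sub_nonneg.2 (rpow_le_rpow_of_nonpos (hl.trans_le hx) h (by linarith))),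
    abs_sub_comm, abs_of_nonneg (sub_nonneg.2 h)]
  exact rpow_neg_sub_le hl hx h hr

lemma rpow_neg_taylor_remainder_le (hl : 0 < l) (ha : l ≤ a) (hb : l ≤ b) (hr : 0 ≤ r) :
    a ^ (-r) - b ^ (-r) + r * b ^ (-r - 1) * (a - b) ≤
      r * (r + 1) * l ^ (-r - 2) * (a - b) ^ 2 := by
  have htangent := rpow_neg_tangent_le (hl.trans_le hb) (hl.trans_le ha) hr
  have hlip := abs_rpow_neg_sub_le hl hb ha (by linarith : 0 ≤ r + 1)
  rw [show -(r + 1) - 1 = -r - 2 by ring, show -(r + 1) = -r - 1 by ring] at hlip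
  calc a ^ (-r) - b ^ (-r) + r * b ^ (-r - 1) * (a - b)
      ≤ r * ((b ^ (-r - 1) - a ^ (-r - 1)) * (a - b)) := by linarith
    _ ≤ r * (|b ^ (-r - 1) - a ^ (-r - 1)| * |b - a|) := by
      rw [abs_sub_comm b a, ← abs_mul]
      gcongr
      exact le_abs_self _
    _ ≤ r * ((r + 1) * l ^ (-r - 2) * |b - a| * |b - a|) := by gcongr
    _ = r * (r + 1) * l ^ (-r - 2) * (a - b) ^ 2 := by rw [← abs_sub_comm a, ← sq_abs (a - b)]; ring

lemma intervalIntegrable_rpow_of_pos (ha : 0 < a) (hb : 0 < b) :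
    IntervalIntegrable (fun η : ℝ => η ^ r) volume a b :=
  intervalIntegral.intervalIntegrable_rpow (Or.inr (Set.notMem_uIcc_of_lt ha hb))

lemma Phi_eq_integral (ha : 0 < a) (hb : 0 < b) :
    Phi γ a b = ∫ η in b..a, (b ^ (-γ) - η ^ (-γ)) := by
  rw [intervalIntegral.integral_sub intervalIntegrable_const (intervalIntegrable_rpow_of_pos hb ha),
    intervalIntegral.integral_const, smul_eq_mul, Phi, mul_comm]

lemma le_Phi (ha : 0 < a) (hb : 0 < b) (haB : a ≤ B) (hbB : b ≤ B) (hγ : 0 ≤ γ) :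
    γ * B ^ (-γ - 1) / 2 * (a - b) ^ 2 ≤ Phi γ a b := by
  have hquad : γ * B ^ (-γ - 1) / 2 * (a - b) ^ 2 = ∫ η in b..a, γ * B ^ (-γ - 1) * (η - b) := by
    rw [intervalIntegral.integral_const_mul, intervalIntegral.integral_comp_sub_right fun η => η,
      integral_id]
    ring
  rw [hquad, Phi_eq_integral ha hb]
  have hlin : IntervalIntegrable (fun η => γ * B ^ (-γ - 1) * (η - b)) volume b a :=
    Continuous.intervalIntegrable (by fun_prop) _ _
  have hpow : IntervalIntegrable (fun η => b ^ (-γ) - η ^ (-γ)) volume b a :=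
    intervalIntegrable_const.sub (intervalIntegrable_rpow_of_pos hb ha)
  rcases le_total b a with hba | hab
  · exact intervalIntegral.integral_mono_on hba hlin hpow fun η hη =>
      le_rpow_neg_sub hb hη.1 (hη.2.trans haB) hγ
  · rw [intervalIntegral.integral_symm a b, intervalIntegral.integral_symm a b]
    refine neg_le_neg (intervalIntegral.integral_mono_on hab hpow.symm hlin.symm fun η hη => ?_)
    linarith [le_rpow_neg_sub (ha.trans_le hη.1) hη.2 hbB hγ]

lemma Phi_nonneg (ha : 0 < a) (hb : 0 < b) (hγ : 0 ≤ γ) : 0 ≤ Phi γ a b := by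
  have hmax := rpow_pos_of_pos (lt_max_of_lt_left ha : 0 < max a b) (-γ - 1)
  exact (mul_nonneg (div_nonneg (mul_nonneg hγ hmax.le) zero_le_two) (sq_nonneg _)).trans
    (le_Phi ha hb (le_max_left a b) (le_max_right a b) hγ)

lemma Phi_add_Phi_swap (γ a b : ℝ) :
    Phi γ a b + Phi γ b a = (b ^ (-γ) - a ^ (-γ)) * (a - b) := by
  rw [Phi, Phi, intervalIntegral.integral_symm b a]
  ring

lemma Phi_le (hl : 0 < l) (ha : l ≤ a) (hb : l ≤ b) (hγ : 0 ≤ γ) :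
    Phi γ a b ≤ γ * l ^ (-γ - 1) * (a - b) ^ 2 :=
  calc Phi γ a b ≤ (b ^ (-γ) - a ^ (-γ)) * (a - b) := by
        linarith [Phi_add_Phi_swap γ a b, Phi_nonneg (hl.trans_le hb) (hl.trans_le ha) hγ]
    _ ≤ |b ^ (-γ) - a ^ (-γ)| * |a - b| := by rw [← abs_mul]; exact le_abs_self _
    _ ≤ γ * l ^ (-γ - 1) * |b - a| * |a - b| := by
        gcongr
        exact abs_rpow_neg_sub_le hl hb ha hγ
    _ = γ * l ^ (-γ - 1) * (a - b) ^ 2 := by rw [abs_sub_comm b a, ← sq_abs (a - b)]; ring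

lemma Phi_eq_sub (ha : 0 < a) (hb : 0 < b) :
    Phi γ a b = b ^ (-γ) * (a - b) -
      ((∫ η in (1 : ℝ)..a, η ^ (-γ)) - ∫ η in (1 : ℝ)..b, η ^ (-γ)) := by
  rw [Phi, intervalIntegral.integral_interval_sub_left
    (intervalIntegrable_rpow_of_pos one_pos ha) (intervalIntegrable_rpow_of_pos one_pos hb)]

lemma hasDerivAt_integral_rpow (hx : 0 < x) :
    HasDerivAt (fun u => ∫ η in (1 : ℝ)..u, η ^ r) (x ^ r) x :=
  intervalIntegral.integral_hasDerivAt_right (intervalIntegrable_rpow_of_pos one_pos hx)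
    (ContinuousAt.stronglyMeasurableAtFilter isOpen_Ioi
      (fun _ hu => continuousAt_rpow_const _ _ (Or.inl (ne_of_gt hu))) x hx)
    (continuousAt_rpow_const _ _ (Or.inl hx.ne'))

lemma hasDerivAt_Phi {f g : ℝ → ℝ} {f' g' : ℝ} (hf : HasDerivAt f f' x) (hg : HasDerivAt g g' x)
    (hf0 : 0 < f x) (hg0 : 0 < g x) :
    HasDerivAt (fun y => Phi γ (f y) (g y))
      ((g x ^ (-γ) - f x ^ (-γ)) * f' - γ * g x ^ (-γ - 1) * (f x - g x) * g') x := by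
  have hderiv := ((hg.rpow_const (p := -γ) (Or.inl hg0.ne')).mul (hf.sub hg)).sub
    (((hasDerivAt_integral_rpow (r := -γ) hf0).comp x hf).sub
      ((hasDerivAt_integral_rpow (r := -γ) hg0).comp x hg))
  refine (hderiv.congr_of_eventuallyEq ?_).congr_deriv ?_
  · filter_upwards [hf.continuousAt.eventually (lt_mem_nhds hf0),
      hg.continuousAt.eventually (lt_mem_nhds hg0)] with y hfy hgy
    exact Phi_eq_sub hfy hgy
  · simp only [Pi.sub_apply]
    ring

lemma contDiffAt_integral_rpow (hx : 0 < x) :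
    ContDiffAt ℝ 1 (fun u => ∫ η in (1 : ℝ)..u, η ^ r) x := by
  have hderiv : Set.EqOn (deriv fun u => ∫ η in (1 : ℝ)..u, η ^ r) (fun u => u ^ r)
    (Set.Ioi 0) := fun u hu => (hasDerivAt_integral_rpow hu).deriv
  have hcont : ContDiffOn ℝ (0 + 1) (fun u => ∫ η in (1 : ℝ)..u, η ^ r) (Set.Ioi 0) := by
    rw [contDiffOn_succ_iff_deriv_of_isOpen isOpen_Ioi, contDiffOn_zero]
    exact ⟨fun u hu => (hasDerivAt_integral_rpow hu).differentiableAt.differentiableWithinAt,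
      by simp, (continuousOn_id.rpow_const fun u hu => Or.inl (ne_of_gt hu)).congr hderiv⟩
  rw [zero_add] at hcont
  exact hcont.contDiffAt (Ioi_mem_nhds hx)

lemma contDiffAt_Phi {E : Type*} [NormedAddCommGroup E] [NormedSpace ℝ E] {f g : E → ℝ} {z : E}
    (hf : ContDiffAt ℝ 1 f z) (hg : ContDiffAt ℝ 1 g z) (hf0 : 0 < f z) (hg0 : 0 < g z) :
    ContDiffAt ℝ 1 (fun y => Phi γ (f y) (g y)) z := by
  have hsum := ((hg.rpow_const_of_ne (p := -γ) hg0.ne').mul (hf.sub hg)).sub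
    (((contDiffAt_integral_rpow (r := -γ) hf0).comp z hf).sub
      ((contDiffAt_integral_rpow (r := -γ) hg0).comp z hg))
  refine hsum.congr_of_eventuallyEq ?_
  filter_upwards [hf.continuousAt.eventually (lt_mem_nhds hf0),
    hg.continuousAt.eventually (lt_mem_nhds hg0)] with y hfy hgy
  exact Phi_eq_sub hfy hgy

end RelativeEntropy

section ParametricIntegrals

variable {F u : ℝ → ℝ → ℝ} {a b c d : ℝ}

lemma continuousOn_intervalIntegral (hab : a ≤ b)
    (hF : ContinuousOn (Function.uncurry F) (Set.Icc a b ×ˢ Set.uIcc c d)) :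
    ContinuousOn (fun τ => ∫ ξ in c..d, F τ ξ) (Set.Icc a b) := by
  wlog hcd : c ≤ d generalizing c d
  · simp only [intervalIntegral.integral_symm d c]
    exact (this (Set.uIcc_comm c d ▸ hF) (le_of_not_ge hcd)).neg
  rw [Set.uIcc_of_le hcd] at hF
  let G : ℝ → ℝ → ℝ := fun τ ξ => F (Set.projIcc a b hab τ) (Set.projIcc c d hcd ξ)
  have hG : Continuous (Function.uncurry G) :=
    hF.comp_continuous (f := fun z : ℝ × ℝ => ((Set.projIcc a b hab z.1 : ℝ),
      (Set.projIcc c d hcd z.2 : ℝ))) (by fun_prop) fun z => ⟨Subtype.prop _, Subtype.prop _⟩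
  refine (intervalIntegral.continuous_parametric_intervalIntegral_of_continuous' hG c d
    ).continuousOn.congr fun τ hτ => intervalIntegral.integral_congr fun ξ hξ => ?_
  rw [Set.uIcc_of_le hcd] at hξ
  simp only [G, Set.projIcc_of_mem hab hτ, Set.projIcc_of_mem hcd hξ]

lemma integral_sub_integral_eq_integral_pt
    (hu : ∀ z ∈ Set.uIcc a b ×ˢ Set.uIcc c d, ContDiffAt ℝ 1 (Function.uncurry u) z) :
    (∫ ξ in c..d, u b ξ) - ∫ ξ in c..d, u a ξ = ∫ τ in a..b, ∫ ξ in c..d, pt u τ ξ := by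
  have hslice : ∀ τ ∈ Set.uIcc a b, IntervalIntegrable (u τ) volume c d := fun τ hτ =>
    ContinuousOn.intervalIntegrable fun ξ hξ =>
      ((hu (τ, ξ) ⟨hτ, hξ⟩).continuousAt.comp (f := fun y => (τ, y))
        (by fun_prop)).continuousWithinAt
  have hpt : ContinuousOn (Function.uncurry (pt u)) (Set.uIcc a b ×ˢ Set.uIcc c d) := fun z hz =>
    (contDiffAt_pt (k := 0) (hu z hz) (by simp)).continuousAt.continuousWithinAt
  rw [← intervalIntegral.integral_sub (hslice b Set.right_mem_uIcc) (hslice a Set.left_mem_uIcc),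
    intervalIntegral_intervalIntegral_swap]
  · refine intervalIntegral.integral_congr fun ξ hξ => ?_
    refine (intervalIntegral.integral_eq_sub_of_hasDerivAt (f := fun τ => u τ ξ) (fun τ hτ =>
      hasDerivAt_pt ((hu (τ, ξ) ⟨hτ, hξ⟩).differentiableAt one_ne_zero)) ?_).symm
    exact ContinuousOn.intervalIntegrable
      (hpt.comp (f := fun τ => (τ, ξ)) (by fun_prop) fun τ hτ => ⟨hτ, hξ⟩)
  · exact (hpt.integrableOn_compact (isCompact_uIcc.prod isCompact_uIcc)).mono_set
      (Set.prod_mono Set.uIoc_subset_uIcc Set.uIoc_subset_uIcc)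

end ParametricIntegrals

section Integration

variable {a b A B L t : ℝ}

lemma le_mul_exp_of_le_add_integral {F : ℝ → ℝ} (hF : ContinuousOn F (Set.Icc a b)) (hB : 0 ≤ B)
    (hle : ∀ t ∈ Set.Icc a b, F t ≤ A + B * ∫ τ in a..t, F τ) :
    ∀ t ∈ Set.Icc a b, F t ≤ A * exp (B * (t - a)) := by
  intro t ht
  have hab : a ≤ b := ht.1.trans ht.2
  have hint : IntervalIntegrable F volume a b := hF.intervalIntegrable_of_Icc hab
  have hcont : ContinuousOn (fun t => A + B * ∫ τ in a..t, F τ) (Set.Icc a b) := by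
    have hprimitive := intervalIntegral.continuousOn_primitive_interval' hint Set.left_mem_uIcc
    rw [Set.uIcc_of_le hab] at hprimitive
    fun_prop
  have hderiv : ∀ x ∈ Set.Ico a b,
      HasDerivWithinAt (fun t => A + B * ∫ τ in a..t, F τ) (B * F x) (Set.Ici x) x := fun x hx => by
    have hnhds : Set.Icc a b ∈ nhdsWithin x (Set.Ici x) := Icc_mem_nhdsGE_of_mem hx
    have hnhds' : Set.Icc a b ∈ nhdsWithin x (Set.Ioi x) :=
      nhdsWithin_mono x Set.Ioi_subset_Ici_self hnhds
    have hFx := (hF x (Set.Ico_subset_Icc_self hx)).mono_of_mem_nhdsWithin hnhds'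
    exact ((intervalIntegral.integral_hasDerivWithinAt_right
      (hint.mono_set (by rw [Set.uIcc_of_le hab, Set.uIcc_of_le hx.1]
                         exact Set.Icc_subset_Icc_right hx.2.le))
      ⟨Set.Icc a b, hnhds', hF.aestronglyMeasurable measurableSet_Icc⟩ hFx).const_mul B).const_add A
  calc F t ≤ A + B * ∫ τ in a..t, F τ := hle t ht
    _ ≤ gronwallBound A B 0 (t - a) := by
        refine le_gronwallBound_of_liminf_deriv_right_le (f' := fun x => B * F x) hcont
          (fun x hx r hr => (hderiv x hx).liminf_right_slope_le hr) (by simp) (fun x hx => ?_) t ht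
        rw [add_zero]
        exact mul_le_mul_of_nonneg_left (hle x (Set.Ico_subset_Icc_self hx)) hB
    _ = A * exp (B * (t - a)) := gronwallBound_ε0 A B (t - a)

lemma neg_integral_mul_deriv_le {p p' u u' : ℝ → ℝ} (hab : a ≤ b)
    (hp : ∀ x ∈ Set.uIcc a b, HasDerivAt p (p' x) x)
    (hu : ∀ x ∈ Set.uIcc a b, HasDerivAt u (u' x) x)
    (hp' : ContinuousOn p' (Set.uIcc a b)) (hu' : ContinuousOn u' (Set.uIcc a b))
    (hpb : 0 ≤ p b) (hanti : ∀ x ∈ Set.Icc a b, p' x ≤ 0)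
    (hL : ∀ x ∈ Set.Icc a b, |u x| ≤ L) :
    -∫ x in a..b, p x * u' x ≤ 2 * L * p a := by
  have hpint : IntervalIntegrable p' volume a b := hp'.intervalIntegrable
  have hftc := intervalIntegral.integral_eq_sub_of_hasDerivAt hp hpint
  have hucont : ContinuousOn u (Set.uIcc a b) :=
    fun x hx => (hu x hx).continuousAt.continuousWithinAt
  have hpa : p b ≤ p a := by
    have := intervalIntegral.integral_mono_on hab hpint intervalIntegrable_const hanti
    rw [hftc, intervalIntegral.integral_zero] at this
    linarith
  have hrest : ∫ x in a..b, p' x * u x ≤ ∫ x in a..b, -L * p' x :=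
    intervalIntegral.integral_mono_on hab (hp'.mul hucont).intervalIntegrable
      (hpint.const_mul _) fun x hx => by nlinarith [neg_le_of_abs_le (hL x hx), hanti x hx]
  rw [intervalIntegral.integral_const_mul, hftc] at hrest
  rw [intervalIntegral.integral_mul_deriv_eq_deriv_mul hp hu hpint hu'.intervalIntegrable]
  have ha := le_of_abs_le (hL a (Set.left_mem_Icc.2 hab))
  have hb := neg_le_of_abs_le (hL b (Set.right_mem_Icc.2 hab))
  linarith [mul_le_mul_of_nonneg_right ha (hpb.trans hpa), mul_le_mul_of_nonneg_right hb hpb]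

lemma integral_exp_neg_mul_le (ha : 0 < a) (t : ℝ) :
    ∫ τ in (0 : ℝ)..t, exp (-(a * τ)) ≤ 1 / a := by
  have hprim : ∀ τ ∈ Set.uIcc 0 t,
      HasDerivAt (fun τ => -exp (-(a * τ)) / a) (exp (-(a * τ))) τ := fun τ _ =>
    ((((hasDerivAt_id τ).const_mul a).neg.exp).neg.div_const a).congr_deriv (by simp; field_simp)
  rw [intervalIntegral.integral_eq_sub_of_hasDerivAt hprim
    (Continuous.intervalIntegrable (by fun_prop) _ _), mul_zero, neg_zero, exp_zero, ← sub_div]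
  gcongr
  linarith [exp_pos (-(a * t))]

lemma integrable_and_integral_le_of_tendsto {α : Type*} [MeasurableSpace α] {ν : Measure α}
    {f : ℕ → α → ℝ} {g : α → ℝ} {y : ℕ → ℝ} {Y : ℝ} (hf : ∀ n, Integrable (f n) ν)
    (hf0 : ∀ n, 0 ≤ᵐ[ν] f n) (hlim : ∀ᵐ x ∂ν, Tendsto (fun n => f n x) atTop (nhds (g x)))
    (hy : ∀ n, ∫ x, f n x ∂ν ≤ y n) (hY : Tendsto y atTop (nhds Y)) :
    Integrable g ν ∧ ∫ x, g x ∂ν ≤ Y := by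
  have hg0 : 0 ≤ᵐ[ν] g := by
    filter_upwards [hlim, ae_all_iff.2 hf0] with x hx hx0
    exact ge_of_tendsto' hx hx0
  have hgm : AEStronglyMeasurable g ν :=
    aestronglyMeasurable_of_tendsto_ae _ (fun n => (hf n).aestronglyMeasurable) hlim
  have hfatou : ∫⁻ x, ENNReal.ofReal (g x) ∂ν ≤ ENNReal.ofReal Y := by
    calc ∫⁻ x, ENNReal.ofReal (g x) ∂ν
        = ∫⁻ x, liminf (fun n => ENNReal.ofReal (f n x)) atTop ∂ν :=
          lintegral_congr_ae <| hlim.mono fun x hx => ((ENNReal.tendsto_ofReal hx).liminf_eq).symm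
      _ ≤ liminf (fun n => ∫⁻ x, ENNReal.ofReal (f n x) ∂ν) atTop :=
          lintegral_liminf_le' fun n => (hf n).aemeasurable.ennreal_ofReal
      _ ≤ liminf (fun n => ENNReal.ofReal (y n)) atTop := liminf_le_liminf <| .of_forall fun n => by
          rw [← ofReal_integral_eq_lintegral_ofReal (hf n) (hf0 n)]
          exact ENNReal.ofReal_le_ofReal (hy n)
      _ = ENNReal.ofReal Y := (ENNReal.tendsto_ofReal hY).liminf_eq
  have hY0 : 0 ≤ Y := ge_of_tendsto' hY fun n => (integral_nonneg_of_ae (hf0 n)).trans (hy n)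
  refine ⟨⟨hgm, ?_⟩, ?_⟩
  · rw [hasFiniteIntegral_iff_ofReal hg0]
    exact hfatou.trans_lt ENNReal.ofReal_lt_top
  · rw [integral_eq_lintegral_of_nonneg_ae hg0 hgm]
    exact ENNReal.toReal_le_of_le_ofReal hY0 hfatou

end Integration

section Cutoff

variable {f g u u' u'' : ℝ → ℝ} {R a b κ θ t A L : ℝ}

/-- The integral of `h` over `[0, R]` against the weight `(1 - ξ/R) ^ 4`. The exponent makes the
square of the derivative of the weight a multiple of the weight times `(1 - ξ/R) ^ 2`, which
`integral_cutoff_sq_deriv_le` can control. -/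
noncomputable def cutoffIntegral (R : ℝ) (h : ℝ → ℝ) : ℝ :=
  ∫ ξ in (0 : ℝ)..R, (1 - ξ / R) ^ 4 * h ξ

lemma cutoff_nonneg (hR : 0 < R) {ξ : ℝ} (hξ : ξ ≤ R) : 0 ≤ 1 - ξ / R :=
  sub_nonneg.2 ((div_le_one hR).2 hξ)

lemma intervalIntegrable_cutoff_pow_mul (n : ℕ) (hf : ContinuousOn f (Set.uIcc 0 R)) :
    IntervalIntegrable (fun ξ => (1 - ξ / R) ^ n * f ξ) volume 0 R :=
  ContinuousOn.intervalIntegrable (by fun_prop)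

lemma cutoffIntegral_linear_comb (hf : ContinuousOn f (Set.uIcc 0 R))
    (hg : ContinuousOn g (Set.uIcc 0 R)) (a b : ℝ) :
    cutoffIntegral R (fun ξ => a * f ξ + b * g ξ) =
      a * cutoffIntegral R f + b * cutoffIntegral R g := by
  simp only [cutoffIntegral, mul_add, mul_left_comm _ a, mul_left_comm _ b]
  rw [intervalIntegral.integral_add ((intervalIntegrable_cutoff_pow_mul 4 hf).const_mul a)
    ((intervalIntegrable_cutoff_pow_mul 4 hg).const_mul b), intervalIntegral.integral_const_mul,
    intervalIntegral.integral_const_mul]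

lemma cutoffIntegral_const_mul (R a : ℝ) (f : ℝ → ℝ) :
    cutoffIntegral R (fun ξ => a * f ξ) = a * cutoffIntegral R f := by
  simp only [cutoffIntegral, mul_left_comm _ a, intervalIntegral.integral_const_mul]

lemma cutoffIntegral_mono (hR : 0 ≤ R) (hf : ContinuousOn f (Set.uIcc 0 R))
    (hg : ContinuousOn g (Set.uIcc 0 R)) (hfg : ∀ ξ ∈ Set.Icc 0 R, f ξ ≤ g ξ) :
    cutoffIntegral R f ≤ cutoffIntegral R g :=
  intervalIntegral.integral_mono_on hR (intervalIntegrable_cutoff_pow_mul 4 hf)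
    (intervalIntegrable_cutoff_pow_mul 4 hg)
    fun ξ hξ => mul_le_mul_of_nonneg_left (hfg ξ hξ) (Even.pow_nonneg (by decide) _)

lemma cutoffIntegral_nonneg (hR : 0 ≤ R) (hf : ∀ ξ ∈ Set.Icc 0 R, 0 ≤ f ξ) :
    0 ≤ cutoffIntegral R f :=
  intervalIntegral.integral_nonneg hR
    fun ξ hξ => mul_nonneg (Even.pow_nonneg (by decide) _) (hf ξ hξ)

lemma continuousOn_cutoffIntegral {F : ℝ → ℝ → ℝ} (hab : a ≤ b)
    (hF : ContinuousOn (Function.uncurry F) (Set.Icc a b ×ˢ Set.uIcc 0 R)) :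
    ContinuousOn (fun τ => cutoffIntegral R (F τ)) (Set.Icc a b) :=
  continuousOn_intervalIntegral hab
    (ContinuousOn.mul (Continuous.continuousOn (by fun_prop)) hF :
      ContinuousOn (Function.uncurry fun τ ξ => (1 - ξ / R) ^ 4 * F τ ξ) _)

lemma cutoffIntegral_eq_setIntegral_Ioi (hR : 0 < R) (f : ℝ → ℝ) :
    cutoffIntegral R f = ∫ ξ in Set.Ioi (0 : ℝ), max 0 (1 - ξ / R) ^ 4 * f ξ := by
  have hsupport : ∀ ξ ∈ Set.Ioi 0 \ Set.Ioc 0 R, max 0 (1 - ξ / R) ^ 4 * f ξ = 0 := fun ξ hξ => by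
    have hRξ : R < ξ := not_le.1 fun h => hξ.2 ⟨hξ.1, h⟩
    rw [max_eq_left (sub_nonpos.2 ((one_le_div hR).2 hRξ.le)), zero_pow four_ne_zero, zero_mul]
  rw [setIntegral_eq_of_subset_of_forall_sdiff_eq_zero measurableSet_Ioi Set.Ioc_subset_Ioi_self
    hsupport, cutoffIntegral, intervalIntegral.integral_of_le hR.le]
  refine setIntegral_congr_fun measurableSet_Ioc fun ξ hξ => ?_
  simp only [max_eq_right (cutoff_nonneg hR hξ.2)]

lemma norm_cutoff_mul_le {ξ : ℝ} (hR : 0 < R) (hξ : 0 ≤ ξ) (f : ℝ → ℝ) :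
    ‖max 0 (1 - ξ / R) ^ 4 * f ξ‖ ≤ ‖f ξ‖ := by
  have hle : max 0 (1 - ξ / R) ≤ 1 := max_le zero_le_one (by linarith [div_nonneg hξ hR.le])
  rw [norm_mul, norm_of_nonneg (by positivity)]
  exact mul_le_of_le_one_left (norm_nonneg _) (pow_le_one₀ (le_max_left _ _) hle)

lemma aestronglyMeasurable_cutoff_mul {ν : Measure ℝ} (hf : AEStronglyMeasurable f ν) (R : ℝ) :
    AEStronglyMeasurable (fun ξ => max 0 (1 - ξ / R) ^ 4 * f ξ) ν :=
  (Continuous.aestronglyMeasurable (by fun_prop)).mul hf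

lemma cutoffIntegral_le_integral_Ioi (hR : 0 < R) (hf : IntegrableOn f (Set.Ioi 0))
    (hf0 : ∀ ξ ∈ Set.Ioi (0 : ℝ), 0 ≤ f ξ) : cutoffIntegral R f ≤ ∫ ξ in Set.Ioi (0 : ℝ), f ξ := by
  rw [cutoffIntegral_eq_setIntegral_Ioi hR]
  refine setIntegral_mono_on (Integrable.mono hf (aestronglyMeasurable_cutoff_mul hf.1 R) ?_) hf
    measurableSet_Ioi fun ξ hξ => ?_
  · exact (ae_restrict_iff' measurableSet_Ioi).2
      (.of_forall fun ξ hξ => norm_cutoff_mul_le hR (le_of_lt hξ) f)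
  · exact (le_norm_self _).trans ((norm_cutoff_mul_le hR (le_of_lt hξ) f).trans
      (norm_of_nonneg (hf0 ξ hξ)).le)

lemma tendsto_cutoffIntegral (hf : IntegrableOn f (Set.Ioi 0)) :
    Tendsto (fun R => cutoffIntegral R f) atTop (nhds (∫ ξ in Set.Ioi (0 : ℝ), f ξ)) := by
  have hlim : Tendsto (fun R => ∫ ξ in Set.Ioi (0 : ℝ), max 0 (1 - ξ / R) ^ 4 * f ξ) atTop
      (nhds (∫ ξ in Set.Ioi (0 : ℝ), f ξ)) := by
    refine tendsto_integral_filter_of_dominated_convergence (fun ξ => ‖f ξ‖)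
      (.of_forall fun R => aestronglyMeasurable_cutoff_mul hf.1 R) ?_ hf.norm
      (.of_forall fun ξ => ?_)
    · filter_upwards [eventually_gt_atTop 0] with R hR
      exact (ae_restrict_iff' measurableSet_Ioi).2
        (.of_forall fun ξ hξ => norm_cutoff_mul_le hR (le_of_lt hξ) f)
    · have hweight : Tendsto (fun R : ℝ => max 0 (1 - ξ / R) ^ 4 * f ξ) atTop
          (nhds (max 0 (1 - 0) ^ 4 * f ξ)) :=
        ((tendsto_const_nhds.max ((tendsto_const_nhds.div_atTop tendsto_id).const_sub 1)).pow
          4).mul_const _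
      simpa using hweight
  refine hlim.congr' ?_
  filter_upwards [eventually_gt_atTop 0] with R hR
  exact (cutoffIntegral_eq_setIntegral_Ioi hR f).symm

lemma hasDerivAt_cutoff_pow (n : ℕ) (R ξ : ℝ) :
    HasDerivAt (fun y : ℝ => (1 - y / R) ^ n) (-(n / R * (1 - ξ / R) ^ (n - 1))) ξ :=
  ((((hasDerivAt_id ξ).div_const R).const_sub 1).pow n).congr_deriv (by simp; ring)

lemma cutoffIntegral_deriv (hR : R ≠ 0) (hu : ∀ ξ ∈ Set.uIcc 0 R, HasDerivAt u (u' ξ) ξ)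
    (hu' : ContinuousOn u' (Set.uIcc 0 R)) :
    cutoffIntegral R u' = -u 0 + ∫ ξ in (0 : ℝ)..R, 4 / R * (1 - ξ / R) ^ 3 * u ξ := by
  rw [cutoffIntegral, intervalIntegral.integral_mul_deriv_eq_deriv_mul
    (fun ξ _ => hasDerivAt_cutoff_pow 4 R ξ) hu
    (Continuous.intervalIntegrable (by fun_prop) _ _) hu'.intervalIntegrable, div_self hR,
    ← sub_eq_zero]
  simp [intervalIntegral.integral_neg]

lemma cutoffIntegral_balance {e J G : ℝ → ℝ → ℝ} (ht : 0 ≤ t) (hR : 0 < R)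
    (he : ∀ z ∈ Set.Icc 0 t ×ˢ Set.Icc 0 R, ContDiffAt ℝ 1 (Function.uncurry e) z)
    (hJ : ∀ z ∈ Set.Icc 0 t ×ˢ Set.Icc 0 R, ContDiffAt ℝ 1 (Function.uncurry J) z)
    (hG : ContinuousOn (Function.uncurry G) (Set.Icc 0 t ×ˢ Set.Icc 0 R))
    (hlaw : ∀ τ ∈ Set.Icc 0 t, ∀ ξ ∈ Set.Ioc 0 R, pt e τ ξ = px J τ ξ + G τ ξ) :
    cutoffIntegral R (e t) - cutoffIntegral R (e 0) =
      ∫ τ in (0 : ℝ)..t, (-J τ 0 + (∫ ξ in (0 : ℝ)..R, 4 / R * (1 - ξ / R) ^ 3 * J τ ξ) +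
        cutoffIntegral R (G τ)) := by
  rw [← Set.uIcc_of_le ht, ← Set.uIcc_of_le hR.le] at he hJ hG
  have hweighted : ∀ z ∈ Set.uIcc 0 t ×ˢ Set.uIcc 0 R,
      ContDiffAt ℝ 1 (Function.uncurry fun τ ξ => (1 - ξ / R) ^ 4 * e τ ξ) z := fun z hz =>
    ((contDiffAt_const.sub (contDiffAt_snd.div_const R)).pow 4).mul (he z hz)
  rw [cutoffIntegral, cutoffIntegral, integral_sub_integral_eq_integral_pt hweighted]
  refine intervalIntegral.integral_congr fun τ hτ => ?_
  have hslice : ∀ ξ ∈ Set.uIcc 0 R, (τ, ξ) ∈ Set.uIcc 0 t ×ˢ Set.uIcc 0 R := fun ξ hξ => ⟨hτ, hξ⟩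
  have hGτ : ContinuousOn (G τ) (Set.uIcc 0 R) :=
    hG.comp (f := fun ξ => (τ, ξ)) (by fun_prop) hslice
  have hJξ : ContinuousOn (px J τ) (Set.uIcc 0 R) := fun ξ hξ =>
    ((contDiffAt_px (k := 0) (hJ _ (hslice ξ hξ)) (by simp)).continuousAt.comp
      (f := fun y => (τ, y)) (by fun_prop)).continuousWithinAt
  have hlin := cutoffIntegral_linear_comb hJξ hGτ 1 1
  simp only [one_mul] at hlin
  rw [← cutoffIntegral_deriv hR.ne' (u := J τ) (fun ξ hξ =>
    hasDerivAt_px ((hJ _ (hslice ξ hξ)).differentiableAt one_ne_zero)) hJξ, ← hlin, cutoffIntegral]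
  refine intervalIntegral.integral_congr_uIoo fun ξ hξ => ?_
  have hξ' := Set.uIoo_subset_uIcc_self hξ
  rw [Set.uIoo_of_le hR.le] at hξ
  rw [← hlaw τ (Set.uIcc_of_le ht ▸ hτ) ξ (Set.Ioo_subset_Ioc_self hξ), pt, deriv_const_mul_field,
    pt]

lemma cutoff_cross_terms_le {η p q w : ℝ} (hR : 0 < R) (hθ : 0 < θ) (hw : |w| ≤ L) :
    2 / R * η * p * w - η ^ 2 * q * w ≤
      1 / 2 * (η ^ 2 * p ^ 2) + (θ * R ^ 2 / 2 * (η ^ 4 * q ^ 2) +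
        (2 + 1 / (2 * θ)) * (L / R) ^ 2) := by
  have hp : 2 / R * η * p * w = 1 / 2 * (η ^ 2 * p ^ 2) + 2 * (w / R) ^ 2 -
      1 / 2 * (η * p - 2 * (w / R)) ^ 2 := by ring
  have hq : -(η ^ 2 * q * w) = θ * R ^ 2 / 2 * (η ^ 4 * q ^ 2) + 1 / (2 * θ) * (w / R) ^ 2 -
      θ / 2 * (R * η ^ 2 * q + w / R / θ) ^ 2 := by field_simp; ring
  have hwR : (w / R) ^ 2 ≤ (L / R) ^ 2 := by
    rw [div_pow, div_pow, ← sq_abs w]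
    gcongr
  have hscaled : (2 + 1 / (2 * θ)) * (w / R) ^ 2 ≤ (2 + 1 / (2 * θ)) * (L / R) ^ 2 := by gcongr
  have hsq : 0 ≤ θ / 2 * (R * η ^ 2 * q + w / R / θ) ^ 2 := by positivity
  linarith [sq_nonneg (η * p - 2 * (w / R))]

lemma integral_cutoff_sq_deriv_eq (hR : R ≠ 0) (hu : ∀ ξ ∈ Set.uIcc 0 R, HasDerivAt u (u' ξ) ξ)
    (hu' : ∀ ξ ∈ Set.uIcc 0 R, HasDerivAt u' (u'' ξ) ξ)
    (hu'' : ContinuousOn u'' (Set.uIcc 0 R)) :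
    ∫ ξ in (0 : ℝ)..R, (1 - ξ / R) ^ 2 * u' ξ ^ 2 = -(u' 0 * u 0) +
      ∫ ξ in (0 : ℝ)..R, (2 / R * (1 - ξ / R) * u' ξ * u ξ - (1 - ξ / R) ^ 2 * u'' ξ * u ξ) := by
  have hucont : ContinuousOn u (Set.uIcc 0 R) :=
    fun ξ hξ => (hu ξ hξ).continuousAt.continuousWithinAt
  have hu'cont : ContinuousOn u' (Set.uIcc 0 R) :=
    fun ξ hξ => (hu' ξ hξ).continuousAt.continuousWithinAt
  have hderiv : ∀ ξ ∈ Set.uIcc 0 R, HasDerivAt (fun y => (1 - y / R) ^ 2 * u' y * u y)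
      ((1 - ξ / R) ^ 2 * u' ξ ^ 2 -
        (2 / R * (1 - ξ / R) * u' ξ * u ξ - (1 - ξ / R) ^ 2 * u'' ξ * u ξ)) ξ := fun ξ hξ =>
    (((hasDerivAt_cutoff_pow 2 R ξ).mul (hu' ξ hξ)).mul (hu ξ hξ)).congr_deriv (by
      simp only [Nat.cast_ofNat, Nat.add_one_sub_one, pow_one, Pi.mul_apply]; ring)
  have hleft : IntervalIntegrable (fun ξ => (1 - ξ / R) ^ 2 * u' ξ ^ 2) volume 0 R :=
    intervalIntegrable_cutoff_pow_mul 2 (hu'cont.pow 2)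
  have hright : IntervalIntegrable (fun ξ => 2 / R * (1 - ξ / R) * u' ξ * u ξ -
      (1 - ξ / R) ^ 2 * u'' ξ * u ξ) volume 0 R := ContinuousOn.intervalIntegrable (by fun_prop)
  have hftc := intervalIntegral.integral_eq_sub_of_hasDerivAt hderiv (hleft.sub hright)
  rw [intervalIntegral.integral_sub hleft hright, div_self hR] at hftc
  simp only [sub_self, zero_div, sub_zero, one_pow, one_mul, ne_eq, OfNat.ofNat_ne_zero,
    not_false_eq_true, zero_pow, zero_mul, zero_sub] at hftc
  linarith

lemma integral_cutoff_sq_deriv_le (hR : 0 < R) (hθ : 0 < θ)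
    (hu : ∀ ξ ∈ Set.Icc 0 R, HasDerivAt u (u' ξ) ξ)
    (hu' : ∀ ξ ∈ Set.Icc 0 R, HasDerivAt u' (u'' ξ) ξ)
    (hu'' : ContinuousOn u'' (Set.Icc 0 R)) (hL : ∀ ξ ∈ Set.Icc 0 R, |u ξ| ≤ L) :
    ∫ ξ in (0 : ℝ)..R, (1 - ξ / R) ^ 2 * u' ξ ^ 2 ≤
      θ * R ^ 2 * cutoffIntegral R (fun ξ => u'' ξ ^ 2) + 2 * L * |u' 0| +
        (4 + 1 / θ) * L ^ 2 / R := by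
  rw [← Set.uIcc_of_le hR.le] at hu hu' hu''
  have hucont : ContinuousOn u (Set.uIcc 0 R) :=
    fun ξ hξ => (hu ξ hξ).continuousAt.continuousWithinAt
  have hu'cont : ContinuousOn u' (Set.uIcc 0 R) :=
    fun ξ hξ => (hu' ξ hξ).continuousAt.continuousWithinAt
  have hsq : IntervalIntegrable (fun ξ => 1 / 2 * ((1 - ξ / R) ^ 2 * u' ξ ^ 2)) volume 0 R :=
    (intervalIntegrable_cutoff_pow_mul 2 (hu'cont.pow 2)).const_mul _
  have hfour : IntervalIntegrable (fun ξ => θ * R ^ 2 / 2 * ((1 - ξ / R) ^ 4 * u'' ξ ^ 2))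
      volume 0 R := (intervalIntegrable_cutoff_pow_mul 4 (hu''.pow 2)).const_mul _
  have hcross := intervalIntegral.integral_mono_on hR.le
    (ContinuousOn.intervalIntegrable (by fun_prop : ContinuousOn (fun ξ =>
      2 / R * (1 - ξ / R) * u' ξ * u ξ - (1 - ξ / R) ^ 2 * u'' ξ * u ξ) (Set.uIcc 0 R)))
    (hsq.add (hfour.add intervalIntegrable_const))
    fun ξ hξ => cutoff_cross_terms_le hR hθ (hL ξ hξ)
  rw [intervalIntegral.integral_add hsq (hfour.add intervalIntegrable_const),
    intervalIntegral.integral_add hfour intervalIntegrable_const,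
    intervalIntegral.integral_const_mul, intervalIntegral.integral_const_mul,
    intervalIntegral.integral_const, sub_zero, smul_eq_mul] at hcross
  have hboundary : -(u' 0 * u 0) ≤ L * |u' 0| := by
    refine (neg_le_abs _).trans ?_
    rw [abs_mul, mul_comm]
    exact mul_le_mul_of_nonneg_right (hL 0 ⟨le_rfl, hR.le⟩) (abs_nonneg _)
  have hconst : 2 * (R * ((2 + 1 / (2 * θ)) * (L / R) ^ 2)) = (4 + 1 / θ) * L ^ 2 / R := by
    field_simp; ring
  rw [cutoffIntegral]
  linarith [integral_cutoff_sq_deriv_eq hR.ne' hu hu' hu'']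

lemma cutoff_flux_le {η p q w y : ℝ} (hR : 0 < R) (hκ : 0 < κ) (hη : 0 ≤ η)
    (hy : y ≤ A * |p| * (|w| + |q|)) :
    4 / R * η ^ 3 * y ≤ κ / 2 * (η ^ 4 * q ^ 2) + κ / 2 * (η ^ 4 * w ^ 2) +
      16 * A ^ 2 / (κ * R ^ 2) * (η ^ 2 * p ^ 2) := by
  have young : ∀ z : ℝ, 4 / R * η ^ 3 * (A * |p| * |z|) =
      κ / 2 * (η ^ 4 * z ^ 2) + 8 * A ^ 2 / (κ * R ^ 2) * (η ^ 2 * p ^ 2) -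
        κ / 2 * (η ^ 2 * |z| - 4 * A / (κ * R) * (η * |p|)) ^ 2 := fun z => by
    rw [← sq_abs z, ← sq_abs p]
    field_simp
    ring
  have hscaled := mul_le_mul_of_nonneg_left hy (by positivity : 0 ≤ 4 / R * η ^ 3)
  have hsq : ∀ z : ℝ, 0 ≤ κ / 2 * (η ^ 2 * |z| - 4 * A / (κ * R) * (η * |p|)) ^ 2 :=
    fun z => by positivity
  calc 4 / R * η ^ 3 * y
      ≤ 4 / R * η ^ 3 * (A * |p| * |w|) + 4 / R * η ^ 3 * (A * |p| * |q|) := by linarith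
    _ ≤ κ / 2 * (η ^ 4 * w ^ 2) + 8 * A ^ 2 / (κ * R ^ 2) * (η ^ 2 * p ^ 2) +
        (κ / 2 * (η ^ 4 * q ^ 2) + 8 * A ^ 2 / (κ * R ^ 2) * (η ^ 2 * p ^ 2)) := by
      linarith [young w, young q, hsq w, hsq q]
    _ = _ := by ring

lemma integral_cutoff_flux_le {J : ℝ → ℝ} (hR : 0 < R) (hκ : 0 < κ)
    (hp : ContinuousOn u' (Set.Icc 0 R)) (hq : ContinuousOn u'' (Set.Icc 0 R))
    (hf : ContinuousOn f (Set.Icc 0 R)) (hJ : ContinuousOn J (Set.Icc 0 R))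
    (hle : ∀ ξ ∈ Set.Icc 0 R, J ξ ≤ A * |u' ξ| * (|f ξ| + |u'' ξ|)) :
    ∫ ξ in (0 : ℝ)..R, 4 / R * (1 - ξ / R) ^ 3 * J ξ ≤
      κ / 2 * cutoffIntegral R (fun ξ => u'' ξ ^ 2) + κ / 2 * cutoffIntegral R (fun ξ => f ξ ^ 2) +
        16 * A ^ 2 / (κ * R ^ 2) * ∫ ξ in (0 : ℝ)..R, (1 - ξ / R) ^ 2 * u' ξ ^ 2 := by
  rw [← Set.uIcc_of_le hR.le] at hp hq hf hJ
  have hsq : ∀ (n : ℕ) (K : ℝ) {h : ℝ → ℝ}, ContinuousOn h (Set.uIcc 0 R) →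
      IntervalIntegrable (fun ξ => K * ((1 - ξ / R) ^ n * h ξ ^ 2)) volume 0 R :=
    fun n K h hh => (intervalIntegrable_cutoff_pow_mul n (hh.pow 2)).const_mul K
  have hqI := hsq 4 (κ / 2) hq
  have hfI := hsq 4 (κ / 2) hf
  have hpI := hsq 2 (16 * A ^ 2 / (κ * R ^ 2)) hp
  rw [cutoffIntegral, cutoffIntegral, ← intervalIntegral.integral_const_mul,
    ← intervalIntegral.integral_const_mul, ← intervalIntegral.integral_const_mul,
    ← intervalIntegral.integral_add hqI hfI, ← intervalIntegral.integral_add (hqI.add hfI) hpI]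
  exact intervalIntegral.integral_mono_on hR.le (ContinuousOn.intervalIntegrable (by fun_prop))
    ((hqI.add hfI).add hpI)
    fun ξ hξ => cutoff_flux_le hR hκ (cutoff_nonneg hR hξ.2) (hle ξ hξ)

lemma exists_forall_integral_cutoff_flux_le (hκ : 0 < κ) (A L D : ℝ) :
    ∃ B, ∀ R : ℝ, 1 ≤ R → ∀ u u' u'' f J : ℝ → ℝ,
      (∀ ξ ∈ Set.Icc 0 R, HasDerivAt u (u' ξ) ξ) →
      (∀ ξ ∈ Set.Icc 0 R, HasDerivAt u' (u'' ξ) ξ) →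
      ContinuousOn u'' (Set.Icc 0 R) → ContinuousOn f (Set.Icc 0 R) →
      ContinuousOn J (Set.Icc 0 R) →
      (∀ ξ ∈ Set.Icc 0 R, |u ξ| ≤ L) → |u' 0| ≤ D →
      (∀ ξ ∈ Set.Icc 0 R, J ξ ≤ A * |u' ξ| * (|f ξ| + |u'' ξ|)) →
      ∫ ξ in (0 : ℝ)..R, 4 / R * (1 - ξ / R) ^ 3 * J ξ ≤
        κ * (cutoffIntegral R (fun ξ => u'' ξ ^ 2) + cutoffIntegral R (fun ξ => f ξ ^ 2)) +
          B / R ^ 2 := by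
  set θ := κ ^ 2 / (32 * (A ^ 2 + 1)) with hθ_def
  have hθ : 0 < θ := by positivity
  refine ⟨16 * A ^ 2 / κ * (2 * L * D + (4 + 1 / θ) * L ^ 2),
    fun R hR u u' u'' f J hu hu' hu'' hf hJ hL hD hle => ?_⟩
  have hR0 : 0 < R := one_pos.trans_le hR
  have hL0 : 0 ≤ L := (abs_nonneg _).trans (hL 0 ⟨le_rfl, hR0.le⟩)
  have hflux := integral_cutoff_flux_le hR0 hκ
    (fun ξ hξ => (hu' ξ hξ).continuousAt.continuousWithinAt) hu'' hf hJ hle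
  have hq0 := cutoffIntegral_nonneg (f := fun ξ => u'' ξ ^ 2) hR0.le fun ξ _ => sq_nonneg _
  have hf0 := cutoffIntegral_nonneg (f := fun ξ => f ξ ^ 2) hR0.le fun ξ _ => sq_nonneg _
  have hgrad : ∫ ξ in (0 : ℝ)..R, (1 - ξ / R) ^ 2 * u' ξ ^ 2 ≤
      θ * R ^ 2 * cutoffIntegral R (fun ξ => u'' ξ ^ 2) + (2 * L * D + (4 + 1 / θ) * L ^ 2) :=
    (integral_cutoff_sq_deriv_le hR0 hθ hu hu' hu'' hL).trans (by
      linarith [mul_le_mul_of_nonneg_left hD (by positivity : 0 ≤ 2 * L),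
        div_le_self (by positivity : 0 ≤ (4 + 1 / θ) * L ^ 2) hR])
  have hA : 16 * A ^ 2 / κ * θ ≤ κ / 2 := by
    rw [hθ_def]
    field_simp
    linarith
  calc _ ≤ κ / 2 * cutoffIntegral R (fun ξ => u'' ξ ^ 2) +
        κ / 2 * cutoffIntegral R (fun ξ => f ξ ^ 2) + 16 * A ^ 2 / (κ * R ^ 2) *
          (θ * R ^ 2 * cutoffIntegral R (fun ξ => u'' ξ ^ 2) +
            (2 * L * D + (4 + 1 / θ) * L ^ 2)) := by
        linarith [mul_le_mul_of_nonneg_left hgrad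
          (by positivity : 0 ≤ 16 * A ^ 2 / (κ * R ^ 2))]
    _ = κ / 2 * cutoffIntegral R (fun ξ => u'' ξ ^ 2) +
        κ / 2 * cutoffIntegral R (fun ξ => f ξ ^ 2) +
          16 * A ^ 2 / κ * θ * cutoffIntegral R (fun ξ => u'' ξ ^ 2) +
            16 * A ^ 2 / κ * (2 * L * D + (4 + 1 / θ) * L ^ 2) / R ^ 2 := by field_simp; ring
    _ ≤ _ := by linarith [mul_le_mul_of_nonneg_right hA hq0, mul_nonneg hκ.le hf0]

end Cutoff

/-- A balance law `e_t = J_ξ + G` on `[0, T] × [0, ∞)` for an integrable energy density `e`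
controlling `f²`. The source dissipates `a D` at the cost of `k f²`, and the flux is quadratic in
`f` and the derivatives of a bounded function `u` with `D` controlling `u_ξξ²`. -/
structure DissipativeBalance (T a k : ℝ) (e J G D f u : ℝ → ℝ → ℝ) : Prop where
  contDiffAt_energy : ∀ z ∈ Set.Icc 0 T ×ˢ Set.Ici 0, ContDiffAt ℝ 1 (Function.uncurry e) z
  contDiffAt_flux : ∀ z ∈ Set.Icc 0 T ×ˢ Set.Ici 0, ContDiffAt ℝ 1 (Function.uncurry J) z
  continuousOn_source : ContinuousOn (Function.uncurry G) (Set.Icc 0 T ×ˢ Set.Ici 0)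
  continuousOn_dissipation : ContinuousOn (Function.uncurry D) (Set.Icc 0 T ×ˢ Set.Ici 0)
  continuousOn_controlled : ContinuousOn (Function.uncurry f) (Set.Icc 0 T ×ˢ Set.Ici 0)
  contDiff_bounded : ContDiff ℝ 2 (Function.uncurry u)
  integrableOn_energy : ∀ τ ∈ Set.Icc 0 T, IntegrableOn (e τ) (Set.Ioi 0)
  integrableOn_dissipation : ∀ τ ∈ Set.Icc 0 T, IntegrableOn (D τ) (Set.Ioi 0)
  balance : ∀ τ ∈ Set.Icc 0 T, ∀ ξ > 0, pt e τ ξ = px J τ ξ + G τ ξ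
  source_le : ∀ τ ∈ Set.Icc 0 T, ∀ ξ ≥ 0, G τ ξ ≤ -a * D τ ξ + k * f τ ξ ^ 2
  flux_le : ∃ A, ∀ τ ∈ Set.Icc 0 T, ∀ ξ ≥ 0,
    J τ ξ ≤ A * |px u τ ξ| * (|f τ ξ| + |px (px u) τ ξ|)
  bounded : ∃ L, ∀ τ ∈ Set.Icc 0 T, ∀ ξ ≥ 0, |u τ ξ| ≤ L
  sq_le_dissipation : ∃ M > 0, ∀ τ ∈ Set.Icc 0 T, ∀ ξ ≥ 0, px (px u) τ ξ ^ 2 ≤ M * D τ ξ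
  sq_le_energy : ∃ M > 0, ∀ τ ∈ Set.Icc 0 T, ∀ ξ ≥ 0, f τ ξ ^ 2 ≤ M * e τ ξ

namespace DissipativeBalance

variable {T a k κ R τ t : ℝ} {e J G D f u F : ℝ → ℝ → ℝ}

lemma continuousOn_slice (hF : ContinuousOn (Function.uncurry F) (Set.Icc 0 T ×ˢ Set.Ici 0))
    (hτ : τ ∈ Set.Icc 0 T) : ContinuousOn (F τ) (Set.Ici 0) :=
  hF.comp (f := fun ξ => (τ, ξ)) (by fun_prop) fun _ hξ => ⟨hτ, hξ⟩

lemma continuousOn_cutoffIntegral_slice (hR : 0 ≤ R)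
    (hF : ContinuousOn (Function.uncurry F) (Set.Icc 0 T ×ˢ Set.Ici 0)) (ht : t ∈ Set.Icc 0 T) :
    ContinuousOn (fun τ => cutoffIntegral R (F τ)) (Set.Icc 0 t) :=
  continuousOn_cutoffIntegral ht.1 (hF.mono (Set.prod_mono (Set.Icc_subset_Icc_right ht.2)
    (Set.uIcc_of_le hR ▸ Set.Icc_subset_Ici_self)))

lemma intervalIntegrable_cutoffIntegral (hR : 0 ≤ R)
    (hF : ContinuousOn (Function.uncurry F) (Set.Icc 0 T ×ˢ Set.Ici 0)) (ht : t ∈ Set.Icc 0 T) :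
    IntervalIntegrable (fun τ => cutoffIntegral R (F τ)) volume 0 t :=
  (continuousOn_cutoffIntegral_slice hR hF ht).intervalIntegrable_of_Icc ht.1

lemma dissipation_nonneg (h : DissipativeBalance T a k e J G D f u) (hτ : τ ∈ Set.Icc 0 T) {ξ : ℝ}
    (hξ : 0 ≤ ξ) : 0 ≤ D τ ξ := by
  obtain ⟨M, hM, hle⟩ := h.sq_le_dissipation
  exact nonneg_of_mul_nonneg_right ((sq_nonneg _).trans (hle τ hτ ξ hξ)) hM

lemma continuousOn_boundary_flux (h : DissipativeBalance T a k e J G D f u) :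
    ContinuousOn (fun τ => J τ 0) (Set.Icc 0 T) := fun τ hτ =>
  ((h.contDiffAt_flux (τ, 0) ⟨hτ, Set.self_mem_Ici⟩).continuousAt.comp (f := fun τ => (τ, (0 : ℝ)))
    (by fun_prop)).continuousWithinAt

lemma continuousOn_sq_controlled (h : DissipativeBalance T a k e J G D f u) :
    ContinuousOn (Function.uncurry fun τ ξ => f τ ξ ^ 2) (Set.Icc 0 T ×ˢ Set.Ici 0) :=
  h.continuousOn_controlled.pow 2

lemma continuousOn_energy (h : DissipativeBalance T a k e J G D f u) :
    ContinuousOn (Function.uncurry e) (Set.Icc 0 T ×ˢ Set.Ici 0) :=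
  fun z hz => (h.contDiffAt_energy z hz).continuousAt.continuousWithinAt

lemma energy_nonneg (h : DissipativeBalance T a k e J G D f u) (hτ : τ ∈ Set.Icc 0 T) {ξ : ℝ}
    (hξ : 0 ≤ ξ) : 0 ≤ e τ ξ := by
  obtain ⟨M, hM, hle⟩ := h.sq_le_energy
  exact nonneg_of_mul_nonneg_right ((sq_nonneg _).trans (hle τ hτ ξ hξ)) hM

lemma contDiff_px_bounded (h : DissipativeBalance T a k e J G D f u) :
    ContDiff ℝ 1 (Function.uncurry (px u)) :=
  contDiff_iff_contDiffAt.2 fun _ => contDiffAt_px h.contDiff_bounded.contDiffAt (by norm_num)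

lemma continuous_px_px_bounded (h : DissipativeBalance T a k e J G D f u) :
    Continuous (Function.uncurry (px (px u))) := continuous_iff_continuousAt.2 fun _ =>
  (contDiffAt_px (k := 0) h.contDiff_px_bounded.contDiffAt (by simp)).continuousAt

lemma exists_forall_flux_le (h : DissipativeBalance T a k e J G D f u) (hκ : 0 < κ) :
    ∃ B, ∀ R : ℝ, 1 ≤ R → ∀ τ ∈ Set.Icc 0 T,
      ∫ ξ in (0 : ℝ)..R, 4 / R * (1 - ξ / R) ^ 3 * J τ ξ ≤
        κ * (cutoffIntegral R (fun ξ => px (px u) τ ξ ^ 2) +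
          cutoffIntegral R (fun ξ => f τ ξ ^ 2)) + B / R ^ 2 := by
  obtain ⟨A, hA⟩ := h.flux_le
  obtain ⟨L, hL⟩ := h.bounded
  have hux := h.contDiff_px_bounded
  obtain ⟨D', hD'⟩ := isCompact_Icc.exists_bound_of_continuousOn (s := Set.Icc 0 T)
    (f := fun τ => px u τ 0)
    (hux.continuous.comp (by fun_prop : Continuous fun τ : ℝ => (τ, (0 : ℝ)))).continuousOn
  obtain ⟨B, hB⟩ := exists_forall_integral_cutoff_flux_le hκ A L D'
  refine ⟨B, fun R hR τ hτ => ?_⟩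
  have hJ : ContinuousOn (Function.uncurry J) (Set.Icc 0 T ×ˢ Set.Ici 0) :=
    fun z hz => (h.contDiffAt_flux z hz).continuousAt.continuousWithinAt
  refine hB R hR (u τ) (px u τ) (px (px u) τ) (f τ) (J τ)
    (fun ξ _ => hasDerivAt_px (h.contDiff_bounded.differentiable two_ne_zero _))
    (fun ξ _ => hasDerivAt_px (hux.differentiable one_ne_zero _))
    (h.continuous_px_px_bounded.comp (by fun_prop : Continuous fun ξ => (τ, ξ))).continuousOn
    ((continuousOn_slice h.continuousOn_controlled hτ).mono Set.Icc_subset_Ici_self)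
    ((continuousOn_slice hJ hτ).mono Set.Icc_subset_Ici_self)
    (fun ξ hξ => hL τ hτ ξ hξ.1) (hD' τ hτ) fun ξ hξ => hA τ hτ ξ hξ.1

lemma cutoffIntegral_source_le (h : DissipativeBalance T a k e J G D f u) (hR : 0 ≤ R)
    (hτ : τ ∈ Set.Icc 0 T) :
    cutoffIntegral R (G τ) ≤
      -a * cutoffIntegral R (D τ) + k * cutoffIntegral R (fun ξ => f τ ξ ^ 2) := by
  have hsub : Set.uIcc 0 R ⊆ Set.Ici 0 := Set.uIcc_of_le hR ▸ Set.Icc_subset_Ici_self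
  have hG := (continuousOn_slice h.continuousOn_source hτ).mono hsub
  have hD := (continuousOn_slice h.continuousOn_dissipation hτ).mono hsub
  have hf := (continuousOn_slice h.continuousOn_sq_controlled hτ).mono hsub
  exact (cutoffIntegral_mono hR hG ((hD.const_mul (-a)).add (hf.const_mul k)) fun ξ hξ =>
    h.source_le τ hτ ξ hξ.1).trans (cutoffIntegral_linear_comb hD hf (-a) k).le

lemma exists_forall_flux_add_source_le (h : DissipativeBalance T a k e J G D f u) (hκ : 0 < κ) :
    ∃ B, ∀ R : ℝ, 1 ≤ R → ∀ τ ∈ Set.Icc 0 T,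
      (∫ ξ in (0 : ℝ)..R, 4 / R * (1 - ξ / R) ^ 3 * J τ ξ) + cutoffIntegral R (G τ) ≤
        -(a - κ) * cutoffIntegral R (D τ) + (k + κ) * cutoffIntegral R (fun ξ => f τ ξ ^ 2) +
          B / R ^ 2 := by
  obtain ⟨M, hM, hle⟩ := h.sq_le_dissipation
  obtain ⟨B, hB⟩ := h.exists_forall_flux_le (κ := min κ (κ / M)) (by positivity)
  refine ⟨B, fun R hR τ hτ => ?_⟩
  have hR0 : 0 ≤ R := zero_le_one.trans hR
  have huxx0 := cutoffIntegral_nonneg (f := fun ξ => px (px u) τ ξ ^ 2) hR0 fun ξ _ => sq_nonneg _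
  have hf0 := cutoffIntegral_nonneg (f := fun ξ => f τ ξ ^ 2) hR0 fun ξ _ => sq_nonneg _
  have hsub : Set.uIcc 0 R ⊆ Set.Ici 0 := Set.uIcc_of_le hR0 ▸ Set.Icc_subset_Ici_self
  have huxx : cutoffIntegral R (fun ξ => px (px u) τ ξ ^ 2) ≤ M * cutoffIntegral R (D τ) := by
    rw [← cutoffIntegral_const_mul]
    exact cutoffIntegral_mono hR0
      (h.continuous_px_px_bounded.comp (by fun_prop : Continuous fun ξ => (τ, ξ))
        |>.pow 2).continuousOn
      (((continuousOn_slice h.continuousOn_dissipation hτ).mono hsub).const_mul M)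
      fun ξ hξ => hle τ hτ ξ hξ.1
  have hκM : min κ (κ / M) * cutoffIntegral R (fun ξ => px (px u) τ ξ ^ 2) ≤
      κ * cutoffIntegral R (D τ) :=
    calc _ ≤ κ / M * (M * cutoffIntegral R (D τ)) :=
          mul_le_mul (min_le_right _ _) huxx huxx0 (by positivity)
      _ = _ := by field_simp
  linarith [hB R hR τ hτ, h.cutoffIntegral_source_le hR0 hτ,
    mul_le_mul_of_nonneg_right (min_le_left κ (κ / M)) hf0]

lemma exists_forall_cutoffIntegral_energy_le (h : DissipativeBalance T a k e J G D f u)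
    (hκ : 0 < κ) :
    ∃ B, ∀ R : ℝ, 1 ≤ R → ∀ t ∈ Set.Icc 0 T,
      cutoffIntegral R (e t) + (a - κ) * ∫ τ in (0 : ℝ)..t, cutoffIntegral R (D τ) ≤
        cutoffIntegral R (e 0) - (∫ τ in (0 : ℝ)..t, J τ 0) +
          (k + κ) * (∫ τ in (0 : ℝ)..t, cutoffIntegral R (fun ξ => f τ ξ ^ 2)) +
            t * (B / R ^ 2) := by
  obtain ⟨B, hB⟩ := h.exists_forall_flux_add_source_le hκ
  refine ⟨B, fun R hR t ht => ?_⟩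
  have hR0 : 0 < R := one_pos.trans_le hR
  have hsub : Set.Icc 0 t ×ˢ Set.Icc 0 R ⊆ Set.Icc 0 T ×ˢ Set.Ici 0 :=
    Set.prod_mono (Set.Icc_subset_Icc_right ht.2) Set.Icc_subset_Ici_self
  have hbalance := cutoffIntegral_balance ht.1 hR0 (fun z hz => h.contDiffAt_energy z (hsub hz))
    (fun z hz => h.contDiffAt_flux z (hsub hz)) (h.continuousOn_source.mono hsub)
    fun τ hτ ξ hξ => h.balance τ ⟨hτ.1, hτ.2.trans ht.2⟩ ξ hξ.1
  have hD := (intervalIntegrable_cutoffIntegral hR0.le h.continuousOn_dissipation ht).const_mul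
    (-(a - κ))
  have hf := (intervalIntegrable_cutoffIntegral hR0.le
    h.continuousOn_sq_controlled ht).const_mul (k + κ)
  have hJ : IntervalIntegrable (fun τ => -J τ 0) volume 0 t :=
    ((h.continuousOn_boundary_flux.mono
      (Set.Icc_subset_Icc_right ht.2)).intervalIntegrable_of_Icc ht.1).neg
  have hflux : ContinuousOn (Function.uncurry fun τ ξ => 4 / R * (1 - ξ / R) ^ 3 * J τ ξ)
      (Set.Icc 0 t ×ˢ Set.uIcc 0 R) := by
    rw [Set.uIcc_of_le hR0.le]
    exact ContinuousOn.mul (Continuous.continuousOn (by fun_prop))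
      fun z hz => (h.contDiffAt_flux z (hsub hz)).continuousAt.continuousWithinAt
  have hbulk : IntervalIntegrable (fun τ => (∫ ξ in (0 : ℝ)..R, 4 / R * (1 - ξ / R) ^ 3 * J τ ξ) +
      cutoffIntegral R (G τ)) volume 0 t :=
    ((continuousOn_intervalIntegral ht.1 hflux).intervalIntegrable_of_Icc ht.1).add
      (intervalIntegrable_cutoffIntegral hR0.le h.continuousOn_source ht)
  have hmono := intervalIntegral.integral_mono_on ht.1 hbulk
    ((hD.add hf).add intervalIntegrable_const) fun τ hτ => hB R hR τ ⟨hτ.1, hτ.2.trans ht.2⟩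
  rw [intervalIntegral.integral_add (hD.add hf) intervalIntegrable_const,
    intervalIntegral.integral_add hD hf, intervalIntegral.integral_const_mul,
    intervalIntegral.integral_const_mul, intervalIntegral.integral_const, sub_zero,
    smul_eq_mul] at hmono
  simp only [add_assoc] at hbalance
  rw [intervalIntegral.integral_add hJ hbulk, intervalIntegral.integral_neg] at hbalance
  linarith

lemma cutoffIntegral_sq_le {M : ℝ} (h : DissipativeBalance T a k e J G D f u) (hR : 0 ≤ R)
    (hτ : τ ∈ Set.Icc 0 T) (hM : ∀ ξ ≥ 0, f τ ξ ^ 2 ≤ M * e τ ξ) :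
    cutoffIntegral R (fun ξ => f τ ξ ^ 2) ≤ M * cutoffIntegral R (e τ) := by
  have hsub : Set.uIcc 0 R ⊆ Set.Ici 0 := Set.uIcc_of_le hR ▸ Set.Icc_subset_Ici_self
  rw [← cutoffIntegral_const_mul]
  exact cutoffIntegral_mono hR ((continuousOn_slice h.continuousOn_sq_controlled hτ).mono hsub)
    (((continuousOn_slice h.continuousOn_energy hτ).mono hsub).const_mul M)
    fun ξ hξ => hM ξ hξ.1

lemma exists_forall_cutoffIntegral_energy_le_integral (h : DissipativeBalance T a k e J G D f u)
    (ha : 0 < a) (hk : 0 ≤ k) (hT : 0 ≤ T) :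
    ∃ B ≥ 0, ∃ c, ∀ R : ℝ, 1 ≤ R → ∀ t ∈ Set.Icc 0 T,
      cutoffIntegral R (e t) ≤ B + c * ∫ τ in (0 : ℝ)..t, cutoffIntegral R (e τ) := by
  obtain ⟨M, -, hM⟩ := h.sq_le_energy
  obtain ⟨B, hB⟩ := h.exists_forall_cutoffIntegral_energy_le ha
  obtain ⟨N, hN⟩ := isCompact_uIcc.exists_bound_of_continuousOn
    (intervalIntegral.continuousOn_primitive_interval' (μ := volume)
      (h.continuousOn_boundary_flux.intervalIntegrable_of_Icc hT) Set.left_mem_uIcc)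
  rw [Set.uIcc_of_le hT] at hN
  have h0 : (0 : ℝ) ∈ Set.Icc 0 T := ⟨le_rfl, hT⟩
  have he0 : 0 ≤ ∫ ξ in Set.Ioi (0 : ℝ), e 0 ξ :=
    setIntegral_nonneg measurableSet_Ioi fun ξ hξ => h.energy_nonneg h0 (le_of_lt hξ)
  refine ⟨(∫ ξ in Set.Ioi (0 : ℝ), e 0 ξ) + N + T * |B|,
    add_nonneg (add_nonneg he0 ((norm_nonneg _).trans (hN 0 h0))) (by positivity),
    (k + a) * M, fun R hR t ht => ?_⟩
  have hR0 : 0 < R := one_pos.trans_le hR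
  have hinit := cutoffIntegral_le_integral_Ioi hR0 (h.integrableOn_energy 0 h0)
    fun ξ hξ => h.energy_nonneg h0 (le_of_lt hξ)
  have hsq := intervalIntegral.integral_mono_on ht.1
    (intervalIntegrable_cutoffIntegral hR0.le h.continuousOn_sq_controlled ht)
    ((intervalIntegrable_cutoffIntegral hR0.le h.continuousOn_energy ht).const_mul M)
    fun τ hτ => h.cutoffIntegral_sq_le hR0.le ⟨hτ.1, hτ.2.trans ht.2⟩
      (hM τ ⟨hτ.1, hτ.2.trans ht.2⟩)
  rw [intervalIntegral.integral_const_mul] at hsq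
  have herror : t * (B / R ^ 2) ≤ T * |B| :=
    mul_le_mul_of_nonneg ht.2 ((div_le_div_of_nonneg_right (le_abs_self B)
      (by positivity)).trans (div_le_self (abs_nonneg B) (one_le_pow₀ hR))) ht.1 (abs_nonneg B)
  have hboundary : -∫ τ in (0 : ℝ)..t, J τ 0 ≤ N := (neg_le_abs _).trans (hN t ht)
  linarith [hB R hR t ht, mul_le_mul_of_nonneg_left hsq (add_nonneg hk ha.le)]

lemma exists_forall_cutoffIntegral_energy_bounded (h : DissipativeBalance T a k e J G D f u)
    (ha : 0 < a) (hk : 0 ≤ k) (hT : 0 ≤ T) :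
    ∃ B, ∀ R : ℝ, 1 ≤ R → ∀ t ∈ Set.Icc 0 T, cutoffIntegral R (e t) ≤ B := by
  obtain ⟨B, hB, c, hc⟩ := h.exists_forall_cutoffIntegral_energy_le_integral ha hk hT
  refine ⟨B * exp (|c| * T), fun R hR t ht => ?_⟩
  have hR0 : 0 ≤ R := zero_le_one.trans hR
  have hgronwall : ∀ t ∈ Set.Icc 0 T,
      cutoffIntegral R (e t) ≤ B + |c| * ∫ τ in (0 : ℝ)..t, cutoffIntegral R (e τ) :=
    fun t ht => (hc R hR t ht).trans (by
      gcongr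
      · exact intervalIntegral.integral_nonneg ht.1 fun τ hτ =>
          cutoffIntegral_nonneg hR0 fun ξ hξ =>
            h.energy_nonneg ⟨hτ.1, hτ.2.trans ht.2⟩ hξ.1
      · exact le_abs_self c)
  refine (le_mul_exp_of_le_add_integral (continuousOn_cutoffIntegral_slice hR0
    h.continuousOn_energy ⟨hT, le_rfl⟩) (abs_nonneg c) hgronwall t ht).trans ?_
  rw [sub_zero]
  gcongr
  exact ht.2

lemma integrableOn_sq (h : DissipativeBalance T a k e J G D f u) (hτ : τ ∈ Set.Icc 0 T) :
    IntegrableOn (fun ξ => f τ ξ ^ 2) (Set.Ioi 0) := by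
  obtain ⟨M, -, hM⟩ := h.sq_le_energy
  refine Integrable.mono' ((h.integrableOn_energy τ hτ).const_mul M)
    (((continuousOn_slice h.continuousOn_sq_controlled hτ).mono
      Set.Ioi_subset_Ici_self).aestronglyMeasurable measurableSet_Ioi)
    ((ae_restrict_iff' measurableSet_Ioi).2 (.of_forall fun ξ hξ => ?_))
  rw [norm_of_nonneg (sq_nonneg _)]
  exact hM τ hτ ξ (le_of_lt hξ)

lemma tendsto_cutoffIntegral_nat {h : ℝ → ℝ} (hh : IntegrableOn h (Set.Ioi 0)) :
    Tendsto (fun n : ℕ => cutoffIntegral (n + 1) h) atTop (nhds (∫ ξ in Set.Ioi (0 : ℝ), h ξ)) :=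
  (tendsto_cutoffIntegral hh).comp
    (tendsto_atTop_add_const_right _ 1 tendsto_natCast_atTop_atTop)

lemma intervalIntegrable_integral_sq (h : DissipativeBalance T a k e J G D f u) (ha : 0 < a)
    (hk : 0 ≤ k) (ht : t ∈ Set.Icc 0 T) :
    IntervalIntegrable (fun τ => ∫ ξ in Set.Ioi (0 : ℝ), f τ ξ ^ 2) volume 0 t := by
  obtain ⟨M, hM, hfe⟩ := h.sq_le_energy
  obtain ⟨B, hB⟩ := h.exists_forall_cutoffIntegral_energy_bounded ha hk (ht.1.trans ht.2)
  have hn : ∀ n : ℕ, (1 : ℝ) ≤ n + 1 := fun n => by simp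
  have hsub : ∀ τ ∈ Set.Ioc 0 t, τ ∈ Set.Icc 0 T := fun τ hτ => ⟨hτ.1.le, hτ.2.trans ht.2⟩
  have hint : ∀ n : ℕ, IntegrableOn (fun τ => cutoffIntegral (n + 1) (fun ξ => f τ ξ ^ 2))
      (Set.Ioc 0 t) := fun n => (intervalIntegrable_iff_integrableOn_Ioc_of_le ht.1).1
    (intervalIntegrable_cutoffIntegral (by positivity) h.continuousOn_sq_controlled ht)
  refine (intervalIntegrable_iff_integrableOn_Ioc_of_le ht.1).2
    (integrable_and_integral_le_of_tendsto hint ?_ ?_ (fun n => ?_)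
      (tendsto_const_nhds (x := ∫ _ in Set.Ioc 0 t, M * B))).1
  · exact fun n => .of_forall fun _ => cutoffIntegral_nonneg (by positivity) fun ξ _ => sq_nonneg _
  · exact (ae_restrict_iff' measurableSet_Ioc).2
      (.of_forall fun τ hτ => tendsto_cutoffIntegral_nat (h.integrableOn_sq (hsub τ hτ)))
  · refine setIntegral_mono_on (hint n) (integrable_const _) measurableSet_Ioc fun τ hτ => ?_
    exact (h.cutoffIntegral_sq_le (by positivity) (hsub τ hτ) (hfe τ (hsub τ hτ))).trans
      (mul_le_mul_of_nonneg_left (hB _ (hn n) τ (hsub τ hτ)) hM.le)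

lemma integral_cutoffIntegral_sq_le (h : DissipativeBalance T a k e J G D f u) (ha : 0 < a)
    (hk : 0 ≤ k) (hR : 0 < R) (ht : t ∈ Set.Icc 0 T) :
    ∫ τ in (0 : ℝ)..t, cutoffIntegral R (fun ξ => f τ ξ ^ 2) ≤
      ∫ τ in (0 : ℝ)..t, ∫ ξ in Set.Ioi (0 : ℝ), f τ ξ ^ 2 :=
  intervalIntegral.integral_mono_on ht.1
    (intervalIntegrable_cutoffIntegral hR.le h.continuousOn_sq_controlled ht)
    (h.intervalIntegrable_integral_sq ha hk ht) fun _ hτ =>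
      cutoffIntegral_le_integral_Ioi hR (h.integrableOn_sq ⟨hτ.1, hτ.2.trans ht.2⟩)
        fun _ _ => sq_nonneg _

lemma integral_dissipation_le_of_tendsto {y : ℕ → ℝ} {Y : ℝ}
    (h : DissipativeBalance T a k e J G D f u) (ht : t ∈ Set.Icc 0 T)
    (hy : ∀ n : ℕ, ∫ τ in (0 : ℝ)..t, cutoffIntegral (n + 1) (D τ) ≤ y n)
    (hY : Tendsto y atTop (nhds Y)) :
    ∫ τ in (0 : ℝ)..t, ∫ ξ in Set.Ioi (0 : ℝ), D τ ξ ≤ Y := by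
  have hsub : ∀ τ ∈ Set.Ioc 0 t, τ ∈ Set.Icc 0 T := fun τ hτ => ⟨hτ.1.le, hτ.2.trans ht.2⟩
  simp only [intervalIntegral.integral_of_le ht.1] at hy ⊢
  exact (integrable_and_integral_le_of_tendsto
    (fun n : ℕ => (intervalIntegrable_iff_integrableOn_Ioc_of_le ht.1).1
      (intervalIntegrable_cutoffIntegral (by positivity) h.continuousOn_dissipation ht))
    (fun n => (ae_restrict_iff' measurableSet_Ioc).2 (.of_forall fun τ hτ =>
      cutoffIntegral_nonneg (by positivity) fun ξ hξ => h.dissipation_nonneg (hsub τ hτ) hξ.1))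
    ((ae_restrict_iff' measurableSet_Ioc).2 (.of_forall fun τ hτ =>
      tendsto_cutoffIntegral_nat (h.integrableOn_dissipation τ (hsub τ hτ)))) hy hY).2

lemma integral_add_sub_mul_le (h : DissipativeBalance T a k e J G D f u) (hk : 0 ≤ k)
    (hκ : 0 < κ) (hκa : κ < a) (ht : t ∈ Set.Icc 0 T) :
    (∫ ξ in Set.Ioi (0 : ℝ), e t ξ) +
        (a - κ) * (∫ τ in (0 : ℝ)..t, ∫ ξ in Set.Ioi (0 : ℝ), D τ ξ) ≤
      (∫ ξ in Set.Ioi (0 : ℝ), e 0 ξ) - (∫ τ in (0 : ℝ)..t, J τ 0) +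
        (k + κ) * ∫ τ in (0 : ℝ)..t, ∫ ξ in Set.Ioi (0 : ℝ), f τ ξ ^ 2 := by
  obtain ⟨B, hB⟩ := h.exists_forall_cutoffIntegral_energy_le hκ
  set Q := ∫ τ in (0 : ℝ)..t, ∫ ξ in Set.Ioi (0 : ℝ), f τ ξ ^ 2
  have hle : ∀ n : ℕ, ∫ τ in (0 : ℝ)..t, cutoffIntegral (n + 1) (D τ) ≤
      (cutoffIntegral (n + 1) (e 0) - (∫ τ in (0 : ℝ)..t, J τ 0) + (k + κ) * Q +
        t * (B / (n + 1) ^ 2) - cutoffIntegral (n + 1) (e t)) / (a - κ) := fun n => by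
    have hQ := h.integral_cutoffIntegral_sq_le (hκ.trans hκa) hk n.cast_add_one_pos ht
    rw [le_div_iff₀' (sub_pos.2 hκa)]
    linarith [hB (n + 1) (by simp) t ht, mul_le_mul_of_nonneg_left hQ (add_nonneg hk hκ.le)]
  have herror : Tendsto (fun n : ℕ => B / ((n : ℝ) + 1) ^ 2) atTop (nhds 0) :=
    tendsto_const_nhds.div_atTop ((tendsto_pow_atTop two_ne_zero).comp
      (tendsto_atTop_add_const_right _ 1 tendsto_natCast_atTop_atTop))
  have hlim := ((((tendsto_cutoffIntegral_nat (h.integrableOn_energy 0 ⟨le_rfl, ht.1.trans ht.2⟩)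
    |>.sub_const (∫ τ in (0 : ℝ)..t, J τ 0)).add_const ((k + κ) * Q)).add
      (herror.const_mul t)).sub
        (tendsto_cutoffIntegral_nat (h.integrableOn_energy t ht))).div_const (a - κ)
  have hdissipation := h.integral_dissipation_le_of_tendsto ht hle hlim
  rw [le_div_iff₀' (sub_pos.2 hκa)] at hdissipation
  linarith

theorem integral_add_mul_le (h : DissipativeBalance T a k e J G D f u) (ha : 0 < a) (hk : 0 ≤ k)
    (ht : t ∈ Set.Icc 0 T) :
    (∫ ξ in Set.Ioi (0 : ℝ), e t ξ) + a * (∫ τ in (0 : ℝ)..t, ∫ ξ in Set.Ioi (0 : ℝ), D τ ξ) ≤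
      (∫ ξ in Set.Ioi (0 : ℝ), e 0 ξ) - (∫ τ in (0 : ℝ)..t, J τ 0) +
        k * ∫ τ in (0 : ℝ)..t, ∫ ξ in Set.Ioi (0 : ℝ), f τ ξ ^ 2 := by
  refine le_of_tendsto_of_tendsto
    ((Continuous.tendsto' (by fun_prop) 0 _ (by rw [sub_zero])).mono_left nhdsWithin_le_nhds)
    ((Continuous.tendsto' (by fun_prop) 0 _ (by rw [add_zero])).mono_left nhdsWithin_le_nhds)
    (?_ : ∀ᶠ κ in nhdsWithin 0 (Set.Ioi 0), (∫ ξ in Set.Ioi (0 : ℝ), e t ξ) +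
        (a - κ) * (∫ τ in (0 : ℝ)..t, ∫ ξ in Set.Ioi (0 : ℝ), D τ ξ) ≤
      (∫ ξ in Set.Ioi (0 : ℝ), e 0 ξ) - (∫ τ in (0 : ℝ)..t, J τ 0) +
        (k + κ) * ∫ τ in (0 : ℝ)..t, ∫ ξ in Set.Ioi (0 : ℝ), f τ ξ ^ 2)
  filter_upwards [Ioo_mem_nhdsGT ha] with κ hκ
  exact h.integral_add_sub_mul_le hk hκ.1 hκ.2 ht

end DissipativeBalance

lemma nsq_nonneg (f : ℝ → ℝ) : 0 ≤ nsq f :=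
  setIntegral_nonneg measurableSet_Ioi fun _ _ => sq_nonneg _

lemma add_mul_add_mul_le {b c x y z : ℝ} (hx : 0 ≤ x) (hy : 0 ≤ y) (hz : 0 ≤ z) :
    x + b * y + c * z ≤ (1 + |b| + |c|) * (x + y + z) :=
  calc x + b * y + c * z ≤ 1 * x + |b| * y + |c| * z := by
        gcongr
        · exact (one_mul x).ge
        · exact le_abs_self b
        · exact le_abs_self c
    _ ≤ (1 + |b| + |c|) * x + (1 + |b| + |c|) * y + (1 + |b| + |c|) * z := by
        gcongr <;> linarith [abs_nonneg b, abs_nonneg c]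
    _ = (1 + |b| + |c|) * (x + y + z) := by ring

/-- The speed of the 2-shock joining `v₋` to `v₊`, as given by the Rankine–Hugoniot conditions. -/
noncomputable def shockSpeed (γ vm vp : ℝ) : ℝ :=
  √((vm ^ (-γ) - vp ^ (-γ)) / (vp - vm))

namespace NSSetting

variable {γ μ vm vp C₀ K : ℝ} (S : NSSetting γ μ vm vp C₀ K) {t ξ : ℝ}

/-- The shifted shock profile `V(ξ − (s − s₋)t + σ − β)`. -/
noncomputable def profile (t ξ : ℝ) : ℝ := S.V (S.sh t ξ)

/-- The derivative `V′` of the shock profile at the shifted argument. -/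
noncomputable def profileSlope (t ξ : ℝ) : ℝ := deriv S.V (S.sh t ξ)

section Bounds

lemma profile_mem_Ioo (t ξ : ℝ) : S.profile t ξ ∈ Set.Ioo vm vp := S.hVrange _

lemma profile_pos (hvm : 0 < vm) (t ξ : ℝ) : 0 < S.profile t ξ :=
  hvm.trans (S.profile_mem_Ioo t ξ).1

lemma profileSlope_pos (t ξ : ℝ) : 0 < S.profileSlope t ξ := S.hV'pos _

lemma vv_eq_profile_add (t ξ : ℝ) : S.vv t ξ = S.profile t ξ + px S.φ t ξ := rfl

lemma vm_lt_vp (S : NSSetting γ μ vm vp C₀ K) : vm < vp := (S.hVrange 0).1.trans (S.hVrange 0).2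

lemma δ_pos : 0 < S.δ := by
  rw [S.hδ]
  exact sub_pos.2 S.vm_lt_vp

lemma s_eq : S.s = shockSpeed γ vm vp := by
  rw [shockSpeed, eq_comm, sqrt_eq_iff_mul_self_eq_of_pos S.hspos,
    eq_div_iff (sub_pos.2 S.vm_lt_vp).ne']
  linear_combination S.s * S.rh1 - S.rh2

lemma sm_neg (hvm : 0 < vm) : S.sm < 0 := by
  rw [S.hsm]
  exact neg_neg_of_pos (div_pos S.humpos hvm)

lemma C₀_pos (S : NSSetting γ μ vm vp C₀ K) : 0 < C₀ := by
  have hdist : 0 < |S.V 0 - vp| + |S.U 0 - S.up| :=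
    add_pos_of_pos_of_nonneg (abs_pos.2 (sub_ne_zero.2 (S.hVrange 0).2.ne)) (abs_nonneg _)
  exact pos_of_mul_pos_left (pos_of_mul_pos_left (hdist.trans_le (S.decayp 0 le_rfl).1)
    (exp_pos _).le) S.δ_pos.le

lemma cm_pos (hμ : 0 < μ) (hvm : 0 < vm) : 0 < S.cm := by
  have hs := S.hspos
  have hcm : 0 ≤ S.cm := by
    rw [S.hcm]
    positivity
  exact hcm.lt_of_ne' (right_ne_zero_of_mul (S.δ_pos.trans_le S.hKcm.2).ne')

lemma K_pos (S : NSSetting γ μ vm vp C₀ K) (hμ : 0 < μ) (hvm : 0 < vm) : 0 < K :=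
  pos_of_mul_pos_left (S.δ_pos.trans_le S.hKcm.2) (S.cm_pos hμ hvm).le

lemma profileSlope_le (hμ : 0 < μ) (hvm : 0 < vm) (t ξ : ℝ) :
    S.profileSlope t ξ ≤ C₀ * S.δ ^ 2 := by
  have hC₀ := S.C₀_pos
  have hs := S.hspos
  have hcp : 0 ≤ S.cp := by
    have hvp := hvm.trans S.vm_lt_vp
    rw [S.hcp]
    positivity
  have hslope : S.profileSlope t ξ ≤ |deriv S.V (S.sh t ξ)| + |deriv S.U (S.sh t ξ)| :=
    (le_abs_self _).trans (le_add_of_nonneg_right (abs_nonneg _))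
  rcases le_total 0 (S.sh t ξ) with hsh | hsh
  · refine hslope.trans ((S.decayp _ hsh).2.trans (mul_le_of_le_one_right (by positivity) ?_))
    exact exp_le_one_iff.2 (neg_nonpos.2 (mul_nonneg hcp hsh))
  · refine hslope.trans ((S.decaym _ hsh).2.trans (mul_le_of_le_one_right (by positivity) ?_))
    exact exp_le_one_iff.2 (mul_nonpos_of_nonneg_of_nonpos (S.cm_pos hμ hvm).le hsh)

lemma m_pos : 0 < S.m := one_pos.trans_le S.hm1

lemma inv_m_le_vv (ht : t ∈ Set.Icc 0 S.T) (hξ : 0 ≤ ξ) : S.m⁻¹ ≤ S.vv t ξ :=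
  one_div S.m ▸ (S.hvbounds t ξ ht.1 ht.2 hξ).1

lemma vv_pos (ht : t ∈ Set.Icc 0 S.T) (hξ : 0 ≤ ξ) : 0 < S.vv t ξ :=
  (inv_pos.2 S.m_pos).trans_le (S.inv_m_le_vv ht hξ)

lemma inv_vv_le (ht : t ∈ Set.Icc 0 S.T) (hξ : 0 ≤ ξ) : (S.vv t ξ)⁻¹ ≤ S.m :=
  inv_le_of_inv_le₀ S.m_pos (S.inv_m_le_vv ht hξ)

lemma abs_ψ_le_one (ht : t ∈ Set.Icc 0 S.T) (hξ : 0 ≤ ξ) : |S.ψ t ξ| ≤ 1 :=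
  (le_add_of_nonneg_left (abs_nonneg _)).trans ((S.hNbound t ξ ht.1 ht.2 hξ).trans S.hN1)

/-- A positive lower bound, comparable to `1 / m`, for both `v` and the profile. -/
noncomputable def volumeBound : ℝ := (S.m * max 1 vm⁻¹)⁻¹

lemma volumeBound_pos : 0 < S.volumeBound :=
  inv_pos.2 (mul_pos S.m_pos (lt_max_of_lt_left one_pos))

lemma volumeBound_le_vv (ht : t ∈ Set.Icc 0 S.T) (hξ : 0 ≤ ξ) : S.volumeBound ≤ S.vv t ξ :=
  (inv_anti₀ S.m_pos (le_mul_of_one_le_right S.m_pos.le (le_max_left _ _))).trans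
    (S.inv_m_le_vv ht hξ)

lemma volumeBound_le_profile (hvm : 0 < vm) (t ξ : ℝ) : S.volumeBound ≤ S.profile t ξ :=
  (inv_le_of_inv_le₀ hvm ((le_max_right _ _).trans
    (le_mul_of_one_le_left (by positivity) S.hm1))).trans (S.profile_mem_Ioo t ξ).1.le

lemma volumeBound_rpow_neg (r : ℝ) : S.volumeBound ^ (-r) = S.m ^ r * max 1 vm⁻¹ ^ r := by
  have hm := S.m_pos
  rw [volumeBound, inv_rpow (by positivity), rpow_neg (by positivity), inv_inv,
    mul_rpow hm.le (by positivity)]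

end Bounds

section Regularity

lemma contDiff_px_φ : ContDiff ℝ (⊤ : ℕ∞) (Function.uncurry (px S.φ)) :=
  contDiff_px_of_smooth S.hφsm

lemma contDiff_px_ψ : ContDiff ℝ (⊤ : ℕ∞) (Function.uncurry (px S.ψ)) :=
  contDiff_px_of_smooth S.hψsm

lemma contDiff_px_px_ψ : ContDiff ℝ (⊤ : ℕ∞) (Function.uncurry (px (px S.ψ))) :=
  contDiff_px_of_smooth S.contDiff_px_ψ

lemma contDiff_pt_ψ : ContDiff ℝ (⊤ : ℕ∞) (Function.uncurry (pt S.ψ)) :=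
  contDiff_pt_of_smooth S.hψsm

lemma contDiff_sh : ContDiff ℝ 2 (Function.uncurry S.sh) := by
  unfold sh Function.uncurry
  fun_prop

lemma contDiff_profile : ContDiff ℝ 2 (Function.uncurry S.profile) := S.hVC2.comp S.contDiff_sh

lemma contDiff_vv : ContDiff ℝ 2 (Function.uncurry S.vv) :=
  S.contDiff_profile.add (contDiff_infty.1 S.contDiff_px_φ 2)

lemma continuous_profileSlope : Continuous (Function.uncurry S.profileSlope) :=
  (S.hVC2.continuous_deriv one_le_two).comp S.contDiff_sh.continuous

lemma hasDerivAt_V (x : ℝ) : HasDerivAt S.V (deriv S.V x) x :=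
  (S.hVC2.differentiable two_ne_zero).differentiableAt.hasDerivAt

lemma hasDerivAt_profile_space (t ξ : ℝ) : HasDerivAt (S.profile t) (S.profileSlope t ξ) ξ :=
  ((S.hasDerivAt_V (S.sh t ξ)).comp ξ
    ((((hasDerivAt_id ξ).sub_const _).add_const _).sub_const _)).congr_deriv (mul_one _)

lemma hasDerivAt_profile_time (t ξ : ℝ) :
    HasDerivAt (fun τ => S.profile τ ξ) (S.profileSlope t ξ * -(S.s - S.sm)) t :=
  ((S.hasDerivAt_V (S.sh t ξ)).comp t (((((hasDerivAt_id t).const_mul (S.s - S.sm)).const_sub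
    ξ).add_const S.σ).sub_const S.β)).congr_deriv (by rw [mul_one]; rfl)

lemma hasDerivAt_vv_space (t ξ : ℝ) :
    HasDerivAt (S.vv t) (S.profileSlope t ξ + px (px S.φ) t ξ) ξ :=
  (S.hasDerivAt_profile_space t ξ).add
    (hasDerivAt_px (S.contDiff_px_φ.differentiable (by simp)).differentiableAt)

lemma hasDerivAt_vv_time (t ξ : ℝ) :
    HasDerivAt (fun τ => S.vv τ ξ)
      (S.profileSlope t ξ * -(S.s - S.sm) + pt (px S.φ) t ξ) t :=
  (S.hasDerivAt_profile_time t ξ).add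
    (hasDerivAt_pt (S.contDiff_px_φ.differentiable (by simp)).differentiableAt)

lemma continuousOn_vv_rpow (r : ℝ) :
    ContinuousOn (Function.uncurry fun τ ξ => S.vv τ ξ ^ r) (Set.Icc 0 S.T ×ˢ Set.Ici 0) :=
  S.contDiff_vv.continuous.continuousOn.rpow_const fun _ hz => Or.inl (S.vv_pos hz.1 hz.2).ne'

lemma continuous_profile_rpow (hvm : 0 < vm) (r : ℝ) :
    Continuous (Function.uncurry fun τ ξ => S.profile τ ξ ^ r) :=
  S.contDiff_profile.continuous.rpow_const fun z => Or.inl (S.profile_pos hvm z.1 z.2).ne'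

end Regularity

section EnergyBalance

/-- The perturbation `u_ξ / v − U_ξ / V` of the viscous stress. -/
noncomputable def stress (t ξ : ℝ) : ℝ :=
  (deriv S.U (S.sh t ξ) + px (px S.ψ) t ξ) / S.vv t ξ - deriv S.U (S.sh t ξ) / S.profile t ξ

/-- The relative energy density `Φ(v, V) + ψ_ξ² / 2`. -/
noncomputable def energy (t ξ : ℝ) : ℝ :=
  Phi γ (S.vv t ξ) (S.profile t ξ) + px S.ψ t ξ ^ 2 / 2

/-- The flux of the relative energy. -/
noncomputable def energyFlux (t ξ : ℝ) : ℝ :=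
  S.sm * Phi γ (S.vv t ξ) (S.profile t ξ) + px S.ψ t ξ * pt S.ψ t ξ -
    S.sm * (px S.ψ t ξ ^ 2 / 2)

/-- The source of the relative energy: viscous dissipation and compression by the profile. -/
noncomputable def energySource (t ξ : ℝ) : ℝ :=
  -(μ * px (px S.ψ) t ξ * S.stress t ξ) + S.s * S.profileSlope t ξ *
    (S.vv t ξ ^ (-γ) - S.profile t ξ ^ (-γ) +
      γ * S.profile t ξ ^ (-γ - 1) * (S.vv t ξ - S.profile t ξ))

/-- The viscous dissipation density `ψ_ξξ² / v`. -/
noncomputable def dissipation (t ξ : ℝ) : ℝ := px (px S.ψ) t ξ ^ 2 / S.vv t ξ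

lemma deriv_U (x : ℝ) : deriv S.U x = -(S.s * deriv S.V x) := by
  have hU : S.U = fun x => S.um + -(S.s * (S.V x - vm)) := funext fun x => by
    linarith [S.hUVm x]
  rw [hU]
  exact ((((S.hasDerivAt_V x).sub_const vm).const_mul S.s).neg.const_add S.um).deriv

lemma stress_eq (hvm : 0 < vm) (ht : t ∈ Set.Icc 0 S.T) (hξ : 0 ≤ ξ) :
    S.stress t ξ = px (px S.ψ) t ξ / S.vv t ξ +
      S.s * S.profileSlope t ξ * px S.φ t ξ / (S.vv t ξ * S.profile t ξ) := by
  have hv := S.vv_pos ht hξ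
  have hV := S.profile_pos hvm t ξ
  rw [stress, S.deriv_U, ← sub_eq_of_eq_add' (S.vv_eq_profile_add t ξ), profileSlope]
  field_simp
  ring

lemma pt_ψ_eq (ht : t ∈ Set.Icc 0 S.T) (hξ : 0 ≤ ξ) :
    pt S.ψ t ξ = S.sm * px S.ψ t ξ - (S.vv t ξ ^ (-γ) - S.profile t ξ ^ (-γ)) +
      μ * S.stress t ξ := by
  have hmomentum : pt S.ψ t ξ - S.sm * px S.ψ t ξ +
    (S.vv t ξ ^ (-γ) - S.profile t ξ ^ (-γ)) = μ * S.stress t ξ := S.eq2 t ξ ht.1 ht.2 hξ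
  linarith

lemma pt_px_φ_eq (ht : t ∈ Set.Icc 0 S.T) (hξ : 0 < ξ) :
    pt (px S.φ) t ξ = S.sm * px (px S.φ) t ξ + px (px S.ψ) t ξ := by
  rw [← px_pt_comm (contDiff_infty.1 S.hφsm 2)]
  have hmass : pt S.φ t =ᶠ[nhds ξ] fun y => S.sm * px S.φ t y + px S.ψ t y := by
    filter_upwards [lt_mem_nhds hξ] with y hy
    linarith [S.eq1 t y ht.1 ht.2 hy.le]
  refine (HasDerivAt.congr_of_eventuallyEq (HasDerivAt.add ?_ ?_) hmass).deriv
  · exact (hasDerivAt_px (S.contDiff_px_φ.differentiable (by simp)).differentiableAt).const_mul _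
  · exact hasDerivAt_px (S.contDiff_px_ψ.differentiable (by simp)).differentiableAt

lemma hasDerivAt_energy (hvm : 0 < vm) (ht : t ∈ Set.Icc 0 S.T) (hξ : 0 ≤ ξ) :
    HasDerivAt (fun τ => S.energy τ ξ)
      ((S.profile t ξ ^ (-γ) - S.vv t ξ ^ (-γ)) *
          (S.profileSlope t ξ * -(S.s - S.sm) + pt (px S.φ) t ξ) -
        γ * S.profile t ξ ^ (-γ - 1) * (S.vv t ξ - S.profile t ξ) *
          (S.profileSlope t ξ * -(S.s - S.sm)) + px S.ψ t ξ * pt (px S.ψ) t ξ) t := by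
  have hPhi := hasDerivAt_Phi (γ := γ) (S.hasDerivAt_vv_time t ξ) (S.hasDerivAt_profile_time t ξ)
    (S.vv_pos ht hξ) (S.profile_pos hvm t ξ)
  have hg : HasDerivAt (fun τ => px S.ψ τ ξ) (pt (px S.ψ) t ξ) t :=
    hasDerivAt_pt (S.contDiff_px_ψ.differentiable (by simp)).differentiableAt
  exact (hPhi.add ((hg.pow 2).div_const 2)).congr_deriv (by push_cast; ring)

lemma hasDerivAt_energyFlux (hvm : 0 < vm) (ht : t ∈ Set.Icc 0 S.T) (hξ : 0 ≤ ξ) :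
    HasDerivAt (S.energyFlux t)
      (S.sm * ((S.profile t ξ ^ (-γ) - S.vv t ξ ^ (-γ)) *
          (S.profileSlope t ξ + px (px S.φ) t ξ) -
        γ * S.profile t ξ ^ (-γ - 1) * (S.vv t ξ - S.profile t ξ) * S.profileSlope t ξ) +
        (px (px S.ψ) t ξ * pt S.ψ t ξ + px S.ψ t ξ * px (pt S.ψ) t ξ) -
        S.sm * (px S.ψ t ξ * px (px S.ψ) t ξ)) ξ := by
  have hPhi := hasDerivAt_Phi (γ := γ) (S.hasDerivAt_vv_space t ξ)
    (S.hasDerivAt_profile_space t ξ) (S.vv_pos ht hξ) (S.profile_pos hvm t ξ)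
  have hg : HasDerivAt (px S.ψ t) (px (px S.ψ) t ξ) ξ :=
    hasDerivAt_px (S.contDiff_px_ψ.differentiable (by simp)).differentiableAt
  have hq : HasDerivAt (pt S.ψ t) (px (pt S.ψ) t ξ) ξ :=
    hasDerivAt_px (S.contDiff_pt_ψ.differentiable (by simp)).differentiableAt
  exact (((hPhi.const_mul S.sm).add (hg.mul hq)).sub
    (((hg.pow 2).div_const 2).const_mul S.sm)).congr_deriv (by push_cast; ring)

lemma pt_energy_eq (hvm : 0 < vm) (ht : t ∈ Set.Icc 0 S.T) (hξ : 0 < ξ) :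
    pt S.energy t ξ = px S.energyFlux t ξ + S.energySource t ξ := by
  have hpt : pt S.energy t ξ = _ := (S.hasDerivAt_energy hvm ht hξ.le).deriv
  have hpx : px S.energyFlux t ξ = _ := (S.hasDerivAt_energyFlux hvm ht hξ.le).deriv
  rw [hpt, hpx, energySource, S.pt_px_φ_eq ht hξ, px_pt_comm (contDiff_infty.1 S.hψsm 2),
    S.pt_ψ_eq ht hξ.le, S.vv_eq_profile_add]
  ring

end EnergyBalance

section Estimates

/-- The constant in front of `δ²m^(γ+2)φ_ξ²` in the estimate of the energy source. -/
noncomputable def sourceConstant (γ μ vm vp C₀ : ℝ) : ℝ :=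
  μ * (shockSpeed γ vm vp * C₀ * (vp - vm)) ^ 2 / (2 * vm ^ 2) +
    shockSpeed γ vm vp * C₀ * (γ * (γ + 1) * max 1 vm⁻¹ ^ (γ + 2))

lemma sourceConstant_nonneg (S : NSSetting γ μ vm vp C₀ K) (hγ : 0 < γ) (hμ : 0 < μ) :
    0 ≤ sourceConstant γ μ vm vp C₀ := by
  have hC₀ := S.C₀_pos
  have hs := S.s_eq ▸ S.hspos
  unfold sourceConstant
  positivity

lemma slope_mul_div_sq_le (hμ : 0 < μ) (hvm : 0 < vm) (ht : t ∈ Set.Icc 0 S.T) (hξ : 0 ≤ ξ) :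
    (S.s * S.profileSlope t ξ * px S.φ t ξ / S.profile t ξ) ^ 2 / S.vv t ξ ≤
      (S.s * C₀ * S.δ ^ 2) ^ 2 / vm ^ 2 * S.m * px S.φ t ξ ^ 2 := by
  have hs := S.hspos
  have hd := S.profileSlope_pos t ξ
  have hV := (S.profile_mem_Ioo t ξ).1.le
  have hv := S.vv_pos ht hξ
  rw [div_pow, mul_pow]
  calc (S.s * S.profileSlope t ξ) ^ 2 * px S.φ t ξ ^ 2 / S.profile t ξ ^ 2 / S.vv t ξ
      = (S.s * S.profileSlope t ξ) ^ 2 / S.profile t ξ ^ 2 * (S.vv t ξ)⁻¹ * px S.φ t ξ ^ 2 := by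
        ring
    _ ≤ (S.s * (C₀ * S.δ ^ 2)) ^ 2 / vm ^ 2 * S.m * px S.φ t ξ ^ 2 := by
        gcongr
        · exact S.profileSlope_le hμ hvm t ξ
        · exact S.inv_vv_le ht hξ
    _ = (S.s * C₀ * S.δ ^ 2) ^ 2 / vm ^ 2 * S.m * px S.φ t ξ ^ 2 := by ring

lemma viscous_source_le (hμ : 0 < μ) (hvm : 0 < vm) (ht : t ∈ Set.Icc 0 S.T) (hξ : 0 ≤ ξ) :
    -(μ * px (px S.ψ) t ξ * S.stress t ξ) ≤ -(μ / 2) * S.dissipation t ξ +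
      μ * (S.s * C₀ * S.δ ^ 2) ^ 2 / (2 * vm ^ 2) * S.m * px S.φ t ξ ^ 2 := by
  have hv := S.vv_pos ht hξ
  have hV := S.profile_pos hvm t ξ
  set x := S.s * S.profileSlope t ξ * px S.φ t ξ / S.profile t ξ with hx
  have hstress : S.stress t ξ = (px (px S.ψ) t ξ + x) / S.vv t ξ := by
    rw [S.stress_eq hvm ht hξ, hx]
    field_simp
  calc -(μ * px (px S.ψ) t ξ * S.stress t ξ)
      = -(μ / 2) * S.dissipation t ξ + μ / 2 * (x ^ 2 / S.vv t ξ) -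
          μ / 2 * ((px (px S.ψ) t ξ + x) ^ 2 / S.vv t ξ) := by
        rw [hstress, dissipation]
        ring
    _ ≤ -(μ / 2) * S.dissipation t ξ + μ / 2 * (x ^ 2 / S.vv t ξ) :=
        sub_le_self _ (by positivity)
    _ ≤ -(μ / 2) * S.dissipation t ξ +
          μ / 2 * ((S.s * C₀ * S.δ ^ 2) ^ 2 / vm ^ 2 * S.m * px S.φ t ξ ^ 2) := by
        gcongr
        exact S.slope_mul_div_sq_le hμ hvm ht hξ
    _ = _ := by ring

lemma compression_source_le (hγ : 0 < γ) (hμ : 0 < μ) (hvm : 0 < vm) (ht : t ∈ Set.Icc 0 S.T)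
    (hξ : 0 ≤ ξ) :
    S.s * S.profileSlope t ξ * (S.vv t ξ ^ (-γ) - S.profile t ξ ^ (-γ) +
        γ * S.profile t ξ ^ (-γ - 1) * (S.vv t ξ - S.profile t ξ)) ≤
      S.s * (C₀ * S.δ ^ 2) *
        (γ * (γ + 1) * (S.m ^ (γ + 2) * max 1 vm⁻¹ ^ (γ + 2)) * px S.φ t ξ ^ 2) := by
  have hs := S.hspos
  have hd := S.profileSlope_pos t ξ
  have hm := S.m_pos
  have htaylor := rpow_neg_taylor_remainder_le S.volumeBound_pos (S.volumeBound_le_vv ht hξ)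
    (S.volumeBound_le_profile hvm t ξ) hγ.le
  rw [show -γ - 2 = -(γ + 2) by ring, volumeBound_rpow_neg,
    sub_eq_of_eq_add' (S.vv_eq_profile_add t ξ)] at htaylor
  rw [sub_eq_of_eq_add' (S.vv_eq_profile_add t ξ)]
  refine (mul_le_mul_of_nonneg_left htaylor (by positivity)).trans ?_
  gcongr
  exact S.profileSlope_le hμ hvm t ξ

lemma energySource_le (hγ : 0 < γ) (hμ : 0 < μ) (hvm : 0 < vm) (ht : t ∈ Set.Icc 0 S.T)
    (hξ : 0 ≤ ξ) :
    S.energySource t ξ ≤ -(μ / 2) * S.dissipation t ξ +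
      sourceConstant γ μ vm vp C₀ * (S.δ ^ 2 * S.m ^ (γ + 2)) * px S.φ t ξ ^ 2 := by
  have hm : S.m ≤ S.m ^ (γ + 2) := self_le_rpow_of_one_le S.hm1 (by linarith)
  calc S.energySource t ξ
      ≤ -(μ / 2) * S.dissipation t ξ +
          μ * (S.s * C₀ * S.δ ^ 2) ^ 2 / (2 * vm ^ 2) * S.m * px S.φ t ξ ^ 2 +
          S.s * (C₀ * S.δ ^ 2) *
            (γ * (γ + 1) * (S.m ^ (γ + 2) * max 1 vm⁻¹ ^ (γ + 2)) * px S.φ t ξ ^ 2) :=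
        add_le_add (S.viscous_source_le hμ hvm ht hξ) (S.compression_source_le hγ hμ hvm ht hξ)
    _ ≤ -(μ / 2) * S.dissipation t ξ +
          μ * (S.s * C₀ * S.δ ^ 2) ^ 2 / (2 * vm ^ 2) * S.m ^ (γ + 2) * px S.φ t ξ ^ 2 +
          S.s * (C₀ * S.δ ^ 2) *
            (γ * (γ + 1) * (S.m ^ (γ + 2) * max 1 vm⁻¹ ^ (γ + 2)) * px S.φ t ξ ^ 2) := by
        gcongr
    _ = _ := by
        rw [sourceConstant, ← S.s_eq, ← S.hδ]
        ring

lemma abs_stress_le (hμ : 0 < μ) (hvm : 0 < vm) (ht : t ∈ Set.Icc 0 S.T) (hξ : 0 ≤ ξ) :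
    |S.stress t ξ| ≤ S.m * (1 + S.s * (C₀ * S.δ ^ 2) / vm) *
      (|px S.φ t ξ| + |px (px S.ψ) t ξ|) := by
  have hs := S.hspos
  have hC₀ := S.C₀_pos
  have hm := S.m_pos
  have hd := S.profileSlope_pos t ξ
  have hv := S.vv_pos ht hξ
  have hV := (S.profile_mem_Ioo t ξ).1.le
  have hdecomp : S.stress t ξ = (S.vv t ξ)⁻¹ * (px (px S.ψ) t ξ +
      S.s * S.profileSlope t ξ / S.profile t ξ * px S.φ t ξ) := by
    rw [S.stress_eq hvm ht hξ]
    field_simp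
  have hratio : 0 ≤ S.s * S.profileSlope t ξ / S.profile t ξ :=
    div_nonneg (by positivity) (S.profile_pos hvm t ξ).le
  calc |S.stress t ξ|
      = (S.vv t ξ)⁻¹ * |px (px S.ψ) t ξ +
          S.s * S.profileSlope t ξ / S.profile t ξ * px S.φ t ξ| := by
        rw [hdecomp, abs_mul, abs_of_pos (inv_pos.2 hv)]
    _ ≤ (S.vv t ξ)⁻¹ * (|px (px S.ψ) t ξ| +
          S.s * S.profileSlope t ξ / S.profile t ξ * |px S.φ t ξ|) := by
        gcongr
        refine (abs_add_le _ _).trans_eq ?_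
        rw [abs_mul, abs_of_nonneg hratio]
    _ ≤ S.m * (|px (px S.ψ) t ξ| + S.s * (C₀ * S.δ ^ 2) / vm * |px S.φ t ξ|) := by
        gcongr
        · exact S.inv_vv_le ht hξ
        · exact S.profileSlope_le hμ hvm t ξ
    _ ≤ S.m * ((|px (px S.ψ) t ξ| + S.s * (C₀ * S.δ ^ 2) / vm * |px S.φ t ξ|) +
          (|px S.φ t ξ| + S.s * (C₀ * S.δ ^ 2) / vm * |px (px S.ψ) t ξ|)) :=
        mul_le_mul_of_nonneg_left (le_add_of_nonneg_right (by positivity)) hm.le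
    _ = _ := by ring

lemma energyFlux_eq (ht : t ∈ Set.Icc 0 S.T) (hξ : 0 ≤ ξ) :
    S.energyFlux t ξ = S.sm * S.energy t ξ +
      px S.ψ t ξ * (μ * S.stress t ξ - (S.vv t ξ ^ (-γ) - S.profile t ξ ^ (-γ))) := by
  rw [energyFlux, energy, S.pt_ψ_eq ht hξ]
  ring

lemma energy_nonneg (hγ : 0 < γ) (hvm : 0 < vm) (ht : t ∈ Set.Icc 0 S.T) (hξ : 0 ≤ ξ) :
    0 ≤ S.energy t ξ :=
  add_nonneg (Phi_nonneg (S.vv_pos ht hξ) (S.profile_pos hvm t ξ) hγ.le) (by positivity)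

lemma energyFlux_le (hγ : 0 < γ) (hμ : 0 < μ) (hvm : 0 < vm) (ht : t ∈ Set.Icc 0 S.T)
    (hξ : 0 ≤ ξ) :
    S.energyFlux t ξ ≤ (μ * (S.m * (1 + S.s * (C₀ * S.δ ^ 2) / vm)) +
      γ * S.volumeBound ^ (-γ - 1)) * |px S.ψ t ξ| * (|px S.φ t ξ| + |px (px S.ψ) t ξ|) := by
  have hpressure := abs_rpow_neg_sub_le S.volumeBound_pos (S.volumeBound_le_vv ht hξ)
    (S.volumeBound_le_profile hvm t ξ) hγ.le
  rw [sub_eq_of_eq_add' (S.vv_eq_profile_add t ξ)] at hpressure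
  have hl : 0 ≤ γ * S.volumeBound ^ (-γ - 1) :=
    mul_nonneg hγ.le (rpow_nonneg S.volumeBound_pos.le _)
  calc S.energyFlux t ξ
      ≤ px S.ψ t ξ * (μ * S.stress t ξ - (S.vv t ξ ^ (-γ) - S.profile t ξ ^ (-γ))) := by
        rw [S.energyFlux_eq ht hξ]
        exact add_le_of_nonpos_left
          (mul_nonpos_of_nonpos_of_nonneg (S.sm_neg hvm).le (S.energy_nonneg hγ hvm ht hξ))
    _ ≤ |px S.ψ t ξ| * (μ * |S.stress t ξ| + |S.vv t ξ ^ (-γ) - S.profile t ξ ^ (-γ)|) := by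
        refine (le_abs_self _).trans ((abs_mul _ _).trans_le ?_)
        gcongr
        refine (abs_sub _ _).trans_eq ?_
        rw [abs_mul, abs_of_pos hμ]
    _ ≤ |px S.ψ t ξ| * (μ * (S.m * (1 + S.s * (C₀ * S.δ ^ 2) / vm) *
          (|px S.φ t ξ| + |px (px S.ψ) t ξ|)) +
          γ * S.volumeBound ^ (-γ - 1) * (|px S.φ t ξ| + |px (px S.ψ) t ξ|)) := by
        gcongr
        · exact S.abs_stress_le hμ hvm ht hξ
        · exact hpressure.trans (mul_le_mul_of_nonneg_left
            (le_add_of_nonneg_right (abs_nonneg _)) hl)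
    _ = _ := by ring

lemma px_px_ψ_sq_le (ht : t ∈ Set.Icc 0 S.T) (hξ : 0 ≤ ξ) :
    px (px S.ψ) t ξ ^ 2 ≤ S.M * S.dissipation t ξ := by
  rw [dissipation, ← mul_div_assoc, le_div_iff₀ (S.vv_pos ht hξ), mul_comm]
  gcongr
  exact (S.hvbounds t ξ ht.1 ht.2 hξ).2

lemma dissipation_le (ht : t ∈ Set.Icc 0 S.T) (hξ : 0 ≤ ξ) :
    S.dissipation t ξ ≤ S.m * px (px S.ψ) t ξ ^ 2 := by
  rw [dissipation, div_eq_inv_mul]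
  gcongr
  exact S.inv_vv_le ht hξ

lemma px_φ_sq_le (hγ : 0 < γ) (hvm : 0 < vm) (ht : t ∈ Set.Icc 0 S.T) (hξ : 0 ≤ ξ) :
    γ * max S.M vp ^ (-γ - 1) / 2 * px S.φ t ξ ^ 2 ≤ S.energy t ξ := by
  have hPhi := le_Phi (S.vv_pos ht hξ) (S.profile_pos hvm t ξ)
    (((S.hvbounds t ξ ht.1 ht.2 hξ).2).trans (le_max_left _ vp))
    ((S.profile_mem_Ioo t ξ).2.le.trans (le_max_right _ _)) hγ.le
  rw [sub_eq_of_eq_add' (S.vv_eq_profile_add t ξ)] at hPhi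
  exact hPhi.trans (le_add_of_nonneg_right (by positivity))

lemma Phi_le_px_φ_sq (hγ : 0 < γ) (hvm : 0 < vm) (ht : t ∈ Set.Icc 0 S.T) (hξ : 0 ≤ ξ) :
    Phi γ (S.vv t ξ) (S.profile t ξ) ≤
      γ * S.volumeBound ^ (-γ - 1) * px S.φ t ξ ^ 2 := by
  have hPhi := Phi_le S.volumeBound_pos (S.volumeBound_le_vv ht hξ)
    (S.volumeBound_le_profile hvm t ξ) hγ.le
  rwa [sub_eq_of_eq_add' (S.vv_eq_profile_add t ξ)] at hPhi

end Estimates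

section Balance

lemma contDiffAt_Phi_vv (hvm : 0 < vm) {z : ℝ × ℝ} (hz : z ∈ Set.Icc 0 S.T ×ˢ Set.Ici 0) :
    ContDiffAt ℝ 1 (Function.uncurry fun t ξ => Phi γ (S.vv t ξ) (S.profile t ξ)) z :=
  contDiffAt_Phi (S.contDiff_vv.of_le one_le_two).contDiffAt
    (S.contDiff_profile.of_le one_le_two).contDiffAt (S.vv_pos hz.1 hz.2) (S.profile_pos hvm _ _)

lemma contDiffAt_energy (hvm : 0 < vm) {z : ℝ × ℝ} (hz : z ∈ Set.Icc 0 S.T ×ˢ Set.Ici 0) :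
    ContDiffAt ℝ 1 (Function.uncurry S.energy) z := by
  have hg := (contDiff_infty.1 S.contDiff_px_ψ 1).contDiffAt (x := z)
  exact (S.contDiffAt_Phi_vv hvm hz).add ((hg.pow 2).div_const 2)

lemma contDiffAt_energyFlux (hvm : 0 < vm) {z : ℝ × ℝ}
    (hz : z ∈ Set.Icc 0 S.T ×ˢ Set.Ici 0) :
    ContDiffAt ℝ 1 (Function.uncurry S.energyFlux) z := by
  have hg := (contDiff_infty.1 S.contDiff_px_ψ 1).contDiffAt (x := z)
  have hq := (contDiff_infty.1 S.contDiff_pt_ψ 1).contDiffAt (x := z)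
  exact ((contDiffAt_const.mul (S.contDiffAt_Phi_vv hvm hz)).add (hg.mul hq)).sub
    (contDiffAt_const.mul ((hg.pow 2).div_const 2))

lemma continuousOn_stress (hvm : 0 < vm) :
    ContinuousOn (Function.uncurry S.stress) (Set.Icc 0 S.T ×ˢ Set.Ici 0) := by
  have hU : Continuous fun z : ℝ × ℝ => deriv S.U (S.sh z.1 z.2) :=
    (S.hUC2.continuous_deriv one_le_two).comp S.contDiff_sh.continuous
  exact ((hU.add S.contDiff_px_px_ψ.continuous).continuousOn.div
    S.contDiff_vv.continuous.continuousOn fun _ hz => (S.vv_pos hz.1 hz.2).ne').sub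
    (hU.div S.contDiff_profile.continuous fun z => (S.profile_pos hvm z.1 z.2).ne').continuousOn

lemma continuousOn_energySource (hvm : 0 < vm) :
    ContinuousOn (Function.uncurry S.energySource) (Set.Icc 0 S.T ×ˢ Set.Ici 0) := by
  have hdiff := S.contDiff_vv.continuous.sub S.contDiff_profile.continuous
  exact ((continuous_const.mul S.contDiff_px_px_ψ.continuous).continuousOn.mul
    (S.continuousOn_stress hvm)).neg.add ((continuous_const.mul
    S.continuous_profileSlope).continuousOn.mul (((S.continuousOn_vv_rpow (-γ)).sub
    (S.continuous_profile_rpow hvm (-γ)).continuousOn).add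
    ((continuous_const.mul (S.continuous_profile_rpow hvm (-γ - 1))).mul hdiff).continuousOn))

lemma continuousOn_dissipation :
    ContinuousOn (Function.uncurry S.dissipation) (Set.Icc 0 S.T ×ˢ Set.Ici 0) :=
  (S.contDiff_px_px_ψ.continuous.pow 2).continuousOn.div S.contDiff_vv.continuous.continuousOn
    fun _ hz => (S.vv_pos hz.1 hz.2).ne'

lemma integrableOn_sq_of_le {F : ℝ → ℝ → ℝ} (hF : Continuous (Function.uncurry F))
    (ht : t ∈ Set.Icc 0 S.T)
    (hle : ∀ ξ, F t ξ ^ 2 ≤ px S.φ t ξ ^ 2 + px S.ψ t ξ ^ 2 + px (px S.ψ) t ξ ^ 2) :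
    IntegrableOn (fun ξ => F t ξ ^ 2) (Set.Ioi 0) := by
  refine (S.hInt t ht.1 ht.2).mono' (by fun_prop) (ae_of_all _ fun ξ => ?_)
  rw [norm_of_nonneg (sq_nonneg _)]
  linarith [hle ξ, sq_nonneg (S.φ t ξ), sq_nonneg (S.ψ t ξ), sq_nonneg (px (px S.φ) t ξ),
    sq_nonneg (px (px (px S.ψ)) t ξ)]

lemma integrableOn_px_φ_sq (ht : t ∈ Set.Icc 0 S.T) :
    IntegrableOn (fun ξ => px S.φ t ξ ^ 2) (Set.Ioi 0) :=
  S.integrableOn_sq_of_le S.contDiff_px_φ.continuous ht fun ξ => by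
    linarith [sq_nonneg (px S.ψ t ξ), sq_nonneg (px (px S.ψ) t ξ)]

lemma integrableOn_px_ψ_sq (ht : t ∈ Set.Icc 0 S.T) :
    IntegrableOn (fun ξ => px S.ψ t ξ ^ 2) (Set.Ioi 0) :=
  S.integrableOn_sq_of_le S.contDiff_px_ψ.continuous ht fun ξ => by
    linarith [sq_nonneg (px S.φ t ξ), sq_nonneg (px (px S.ψ) t ξ)]

lemma integrableOn_px_px_ψ_sq (ht : t ∈ Set.Icc 0 S.T) :
    IntegrableOn (fun ξ => px (px S.ψ) t ξ ^ 2) (Set.Ioi 0) :=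
  S.integrableOn_sq_of_le S.contDiff_px_px_ψ.continuous ht fun ξ => by
    linarith [sq_nonneg (px S.φ t ξ), sq_nonneg (px S.ψ t ξ)]

lemma integrableOn_Phi (hγ : 0 < γ) (hvm : 0 < vm) (ht : t ∈ Set.Icc 0 S.T) :
    IntegrableOn (fun ξ => Phi γ (S.vv t ξ) (S.profile t ξ)) (Set.Ioi 0) := by
  have hcont : ContinuousOn (fun ξ => Phi γ (S.vv t ξ) (S.profile t ξ)) (Set.Ioi 0) :=
    fun ξ hξ =>
      ((S.contDiffAt_Phi_vv hvm (z := (t, ξ)) ⟨ht, Set.mem_Ici_of_Ioi hξ⟩).continuousAt.comp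
        (f := fun ξ => (t, ξ)) (by fun_prop)).continuousWithinAt
  refine ((S.integrableOn_px_φ_sq ht).const_mul (γ * S.volumeBound ^ (-γ - 1))).mono'
    (hcont.aestronglyMeasurable measurableSet_Ioi)
    (ae_restrict_of_forall_mem measurableSet_Ioi fun ξ hξ => ?_)
  rw [norm_of_nonneg (Phi_nonneg (S.vv_pos ht (le_of_lt hξ)) (S.profile_pos hvm t ξ) hγ.le)]
  exact S.Phi_le_px_φ_sq hγ hvm ht (le_of_lt hξ)

lemma integrableOn_dissipation (ht : t ∈ Set.Icc 0 S.T) :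
    IntegrableOn (S.dissipation t) (Set.Ioi 0) := by
  have hcont : ContinuousOn (S.dissipation t) (Set.Ioi 0) :=
    S.continuousOn_dissipation.comp (f := fun ξ => (t, ξ)) (by fun_prop)
      fun _ hξ => ⟨ht, Set.mem_Ici_of_Ioi hξ⟩
  refine ((S.integrableOn_px_px_ψ_sq ht).const_mul S.m).mono'
    (hcont.aestronglyMeasurable measurableSet_Ioi)
    (ae_restrict_of_forall_mem measurableSet_Ioi fun ξ hξ => ?_)
  rw [dissipation, norm_of_nonneg (div_nonneg (sq_nonneg _) (S.vv_pos ht (le_of_lt hξ)).le)]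
  exact S.dissipation_le ht (le_of_lt hξ)

lemma integral_energy (hγ : 0 < γ) (hvm : 0 < vm) (ht : t ∈ Set.Icc 0 S.T) :
    ∫ ξ in Set.Ioi 0, S.energy t ξ =
      (∫ ξ in Set.Ioi 0, Phi γ (S.vv t ξ) (S.profile t ξ)) + nsq (px S.ψ t) / 2 := by
  rw [nsq, ← integral_div]
  exact integral_add (S.integrableOn_Phi hγ hvm ht) ((S.integrableOn_px_ψ_sq ht).div_const 2)

lemma integral_Phi_nonneg (hγ : 0 < γ) (hvm : 0 < vm) (ht : t ∈ Set.Icc 0 S.T) :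
    0 ≤ ∫ ξ in Set.Ioi 0, Phi γ (S.vv t ξ) (S.profile t ξ) :=
  setIntegral_nonneg measurableSet_Ioi fun ξ hξ =>
    Phi_nonneg (S.vv_pos ht (le_of_lt hξ)) (S.profile_pos hvm t ξ) hγ.le

lemma dissipativeBalance (hγ : 0 < γ) (hμ : 0 < μ) (hvm : 0 < vm) :
    DissipativeBalance S.T (μ / 2) (sourceConstant γ μ vm vp C₀ * (S.δ ^ 2 * S.m ^ (γ + 2)))
      S.energy S.energyFlux S.energySource S.dissipation (px S.φ) S.ψ where
  contDiffAt_energy _ := S.contDiffAt_energy hvm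
  contDiffAt_flux _ := S.contDiffAt_energyFlux hvm
  continuousOn_source := S.continuousOn_energySource hvm
  continuousOn_dissipation := S.continuousOn_dissipation
  continuousOn_controlled := S.contDiff_px_φ.continuous.continuousOn
  contDiff_bounded := contDiff_infty.1 S.hψsm 2
  integrableOn_energy _ ht :=
    (S.integrableOn_Phi hγ hvm ht).add ((S.integrableOn_px_ψ_sq ht).div_const 2)
  integrableOn_dissipation _ := S.integrableOn_dissipation
  balance _ ht _ hξ := S.pt_energy_eq hvm ht hξ
  source_le _ ht _ hξ := S.energySource_le hγ hμ hvm ht hξ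
  flux_le := ⟨_, fun _ ht _ hξ => S.energyFlux_le hγ hμ hvm ht hξ⟩
  bounded := ⟨1, fun _ ht _ hξ => S.abs_ψ_le_one ht hξ⟩
  sq_le_dissipation := ⟨S.M, one_pos.trans_le S.hM1, fun _ ht _ hξ => S.px_px_ψ_sq_le ht hξ⟩
  sq_le_energy := by
    have hB : 0 < γ * max S.M vp ^ (-γ - 1) / 2 := by
      have hM : 0 < max S.M vp := lt_max_of_lt_left (one_pos.trans_le S.hM1)
      positivity
    exact ⟨_, inv_pos.2 hB, fun _ ht _ hξ =>
      (le_inv_mul_iff₀ hB).2 (S.px_φ_sq_le hγ hvm ht hξ)⟩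

end Balance

section Boundary

/-- The constant in front of `e^(−c₋β)` in the estimate of the boundary flux. -/
noncomputable def boundaryConstant (γ vm vp C₀ K : ℝ) : ℝ :=
  (γ * vm ^ (-γ - 1) * K + 2 * shockSpeed γ vm vp) * (C₀ * (vp - vm) * exp (K ^ 2))

lemma s_sub_sm_pos (hvm : 0 < vm) : 0 < S.s - S.sm :=
  sub_pos.2 ((S.sm_neg hvm).trans S.hspos)

lemma sh_boundary (t : ℝ) : S.sh t 0 = -((S.s - S.sm) * t) + S.σ - S.β := by
  rw [sh, zero_sub]

lemma sh_boundary_nonpos (hvm : 0 < vm) (ht : 0 ≤ t) : S.sh t 0 ≤ 0 := by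
  rw [sh_boundary]
  linarith [mul_nonneg (S.s_sub_sm_pos hvm).le ht, le_abs_self S.σ, S.hβσ]

lemma px_φ_boundary (ht : t ∈ Set.Icc 0 S.T) : px S.φ t 0 = vm - S.profile t 0 := by
  rw [S.bdφx t ht.1 ht.2, profile, sh_boundary]

lemma px_ψ_boundary (ht : t ∈ Set.Icc 0 S.T) : px S.ψ t 0 = S.s * (S.profile t 0 - vm) := by
  rw [S.bdψx t ht.1 ht.2, profile, sh_boundary]
  linarith [S.hUVm (-((S.s - S.sm) * t) + S.σ - S.β)]

lemma vv_boundary (ht : t ∈ Set.Icc 0 S.T) : S.vv t 0 = vm := by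
  rw [vv_eq_profile_add, S.px_φ_boundary ht, add_sub_cancel]

/-- A bound for the deviation from `v₋` of the profile at the boundary at time `0`. -/
noncomputable def boundaryTail : ℝ := C₀ * S.δ * exp (K ^ 2) * exp (-(S.cm * S.β))

lemma boundaryTail_pos : 0 < S.boundaryTail := by
  have hC₀ := S.C₀_pos
  have hδ := S.δ_pos
  unfold boundaryTail
  positivity

lemma profile_boundary_sub_le (hμ : 0 < μ) (hvm : 0 < vm) (ht : 0 ≤ t) :
    S.profile t 0 - vm ≤ S.boundaryTail * exp (-(S.cm * (S.s - S.sm) * t)) := by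
  have hC₀ := S.C₀_pos
  have hδ := S.δ_pos
  have hshift : S.cm * S.σ ≤ K ^ 2 :=
    calc S.cm * S.σ ≤ S.cm * |S.σ| :=
          mul_le_mul_of_nonneg_left (le_abs_self _) (S.cm_pos hμ hvm).le
      _ ≤ K * S.δ * |S.σ| := mul_le_mul_of_nonneg_right S.hKcm.1 (abs_nonneg _)
      _ = K * (S.δ * |S.σ|) := mul_assoc _ _ _
      _ ≤ K * K := mul_le_mul_of_nonneg_left S.hσδ (S.K_pos hμ hvm).le
      _ = K ^ 2 := (sq K).symm
  calc S.profile t 0 - vm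
      ≤ |S.V (S.sh t 0) - vm| + |S.U (S.sh t 0) - S.um| :=
        (le_abs_self _).trans (le_add_of_nonneg_right (abs_nonneg _))
    _ ≤ C₀ * S.δ * exp (S.cm * S.sh t 0) := (S.decaym _ (S.sh_boundary_nonpos hvm ht)).1
    _ ≤ C₀ * S.δ * exp (K ^ 2 + -(S.cm * S.β) + -(S.cm * (S.s - S.sm) * t)) := by
        gcongr
        rw [sh_boundary]
        linarith
    _ = S.boundaryTail * exp (-(S.cm * (S.s - S.sm) * t)) := by
        rw [exp_add, exp_add, boundaryTail]
        ring

lemma neg_energyFlux_boundary_le (hγ : 0 < γ) (hvm : 0 < vm) (ht : t ∈ Set.Icc 0 S.T) :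
    -S.energyFlux t 0 ≤ (S.s - S.sm) * (γ * vm ^ (-γ - 1) * S.δ) * (S.profile t 0 - vm) -
      S.s * ((S.profile t 0 - vm) * pt S.ψ t 0) := by
  have hs := S.hspos
  have hsm := S.sm_neg hvm
  obtain ⟨hV, hVp⟩ := S.profile_mem_Ioo t 0
  have hPhi : Phi γ vm (S.profile t 0) ≤ γ * vm ^ (-γ - 1) * (S.δ * (S.profile t 0 - vm)) := by
    refine (Phi_le hvm le_rfl hV.le hγ.le).trans ?_
    rw [S.hδ, sub_sq_comm, sq]
    gcongr
  have hPhi0 : 0 ≤ Phi γ vm (S.profile t 0) := Phi_nonneg hvm (S.profile_pos hvm t 0) hγ.le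
  rw [energyFlux, S.vv_boundary ht, S.px_ψ_boundary ht]
  calc _ = -S.sm * Phi γ vm (S.profile t 0) + S.sm * ((S.s * (S.profile t 0 - vm)) ^ 2 / 2) -
          S.s * ((S.profile t 0 - vm) * pt S.ψ t 0) := by ring
    _ ≤ (S.s - S.sm) * (γ * vm ^ (-γ - 1) * (S.δ * (S.profile t 0 - vm))) + 0 -
          S.s * ((S.profile t 0 - vm) * pt S.ψ t 0) := by
        gcongr
        · linarith
        · linarith
        · exact mul_nonpos_of_nonpos_of_nonneg hsm.le (by positivity)
    _ = _ := by ring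

lemma continuous_profile_boundary_sub : Continuous fun τ => S.profile τ 0 - vm :=
  (S.contDiff_profile.continuous.comp (f := fun τ => (τ, (0 : ℝ))) (by fun_prop)).sub
    continuous_const

lemma continuous_pt_ψ_boundary : Continuous fun τ => pt S.ψ τ 0 :=
  S.contDiff_pt_ψ.continuous.comp (f := fun τ => (τ, (0 : ℝ))) (by fun_prop)

lemma integral_profile_boundary_sub_le (hμ : 0 < μ) (hvm : 0 < vm) (ht : 0 ≤ t) :
    (S.s - S.sm) * S.δ * ∫ τ in (0 : ℝ)..t, (S.profile τ 0 - vm) ≤ K * S.boundaryTail := by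
  have hspeed := S.s_sub_sm_pos hvm
  have hcm := S.cm_pos hμ hvm
  have hδ := S.δ_pos
  have hP := S.boundaryTail_pos
  calc (S.s - S.sm) * S.δ * ∫ τ in (0 : ℝ)..t, (S.profile τ 0 - vm)
      ≤ (S.s - S.sm) * S.δ *
          ∫ τ in (0 : ℝ)..t, S.boundaryTail * exp (-(S.cm * (S.s - S.sm) * τ)) := by
        gcongr
        exact intervalIntegral.integral_mono_on ht
          (S.continuous_profile_boundary_sub.intervalIntegrable _ _)
          (Continuous.intervalIntegrable (by fun_prop) _ _)
          fun τ hτ => S.profile_boundary_sub_le hμ hvm hτ.1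
    _ ≤ (S.s - S.sm) * S.δ * (S.boundaryTail * (1 / (S.cm * (S.s - S.sm)))) := by
        rw [intervalIntegral.integral_const_mul]
        gcongr
        exact integral_exp_neg_mul_le (by positivity) t
    _ = S.δ / S.cm * S.boundaryTail := by field_simp
    _ ≤ K * S.boundaryTail := by
        gcongr
        exact (div_le_iff₀ hcm).2 S.hKcm.2

lemma neg_integral_profile_boundary_mul_pt_ψ_le (hμ : 0 < μ) (hvm : 0 < vm)
    (ht : t ∈ Set.Icc 0 S.T) :
    -∫ τ in (0 : ℝ)..t, (S.profile τ 0 - vm) * pt S.ψ τ 0 ≤ 2 * S.boundaryTail := by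
  have hspeed := S.s_sub_sm_pos hvm
  have hparts : -∫ τ in (0 : ℝ)..t, (S.profile τ 0 - vm) * pt S.ψ τ 0 ≤
      2 * 1 * (S.profile 0 0 - vm) := neg_integral_mul_deriv_le ht.1
    (fun τ _ => (S.hasDerivAt_profile_time τ 0).sub_const vm)
    (fun τ _ => hasDerivAt_pt (S.hψsm.differentiable (by simp)).differentiableAt)
    ((S.continuous_profileSlope.comp (f := fun τ => (τ, (0 : ℝ))) (by fun_prop)).mul
      continuous_const).continuousOn S.continuous_pt_ψ_boundary.continuousOn
    (sub_nonneg.2 (S.profile_mem_Ioo t 0).1.le)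
    (fun τ _ => mul_nonpos_of_nonneg_of_nonpos (S.profileSlope_pos τ 0).le (by linarith))
    (fun τ hτ => S.abs_ψ_le_one ⟨hτ.1, hτ.2.trans ht.2⟩ le_rfl)
  have hinit := S.profile_boundary_sub_le hμ hvm le_rfl
  rw [mul_zero, neg_zero, exp_zero, mul_one] at hinit
  linarith

lemma neg_integral_energyFlux_boundary_le (hγ : 0 < γ) (hμ : 0 < μ) (hvm : 0 < vm)
    (ht : t ∈ Set.Icc 0 S.T) :
    -∫ τ in (0 : ℝ)..t, S.energyFlux τ 0 ≤
      boundaryConstant γ vm vp C₀ K * exp (-(S.cm * S.β)) := by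
  have hs := S.hspos
  have hjump := (S.continuous_profile_boundary_sub.intervalIntegrable (μ := volume) 0 t).const_mul
    ((S.s - S.sm) * (γ * vm ^ (-γ - 1) * S.δ))
  have hwork : IntervalIntegrable (fun τ => S.s * ((S.profile τ 0 - vm) * pt S.ψ τ 0)) volume 0 t :=
    ((S.continuous_profile_boundary_sub.mul S.continuous_pt_ψ_boundary).intervalIntegrable _
      _).const_mul _
  have hflux : IntervalIntegrable (fun τ => S.energyFlux τ 0) volume 0 t :=
    ((S.dissipativeBalance hγ hμ hvm).continuousOn_boundary_flux.mono
      (Set.Icc_subset_Icc_right ht.2)).intervalIntegrable_of_Icc ht.1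
  calc -∫ τ in (0 : ℝ)..t, S.energyFlux τ 0
      ≤ ∫ τ in (0 : ℝ)..t, ((S.s - S.sm) * (γ * vm ^ (-γ - 1) * S.δ) * (S.profile τ 0 - vm) -
          S.s * ((S.profile τ 0 - vm) * pt S.ψ τ 0)) := by
        rw [← intervalIntegral.integral_neg]
        exact intervalIntegral.integral_mono_on ht.1 hflux.neg (hjump.sub hwork) fun τ hτ =>
          S.neg_energyFlux_boundary_le hγ hvm ⟨hτ.1, hτ.2.trans ht.2⟩
    _ = γ * vm ^ (-γ - 1) * ((S.s - S.sm) * S.δ * ∫ τ in (0 : ℝ)..t, (S.profile τ 0 - vm)) +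
          S.s * -∫ τ in (0 : ℝ)..t, (S.profile τ 0 - vm) * pt S.ψ τ 0 := by
        rw [intervalIntegral.integral_sub hjump hwork, intervalIntegral.integral_const_mul,
          intervalIntegral.integral_const_mul]
        ring
    _ ≤ γ * vm ^ (-γ - 1) * (K * S.boundaryTail) + S.s * (2 * S.boundaryTail) := by
        gcongr γ * vm ^ (-γ - 1) * ?_ + S.s * ?_
        · exact S.integral_profile_boundary_sub_le hμ hvm ht.1
        · exact S.neg_integral_profile_boundary_mul_pt_ψ_le hμ hvm ht
    _ = boundaryConstant γ vm vp C₀ K * exp (-(S.cm * S.β)) := by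
        rw [boundaryConstant, boundaryTail, ← S.s_eq, ← S.hδ]
        ring

end Boundary

section EnergyEstimate

lemma integral_dissipation_nonneg (ht : t ∈ Set.Icc 0 S.T) :
    0 ≤ ∫ τ in (0 : ℝ)..t, ∫ ξ in Set.Ioi (0 : ℝ), S.dissipation τ ξ :=
  intervalIntegral.integral_nonneg ht.1 fun _ hτ =>
    setIntegral_nonneg measurableSet_Ioi fun _ hξ =>
      div_nonneg (sq_nonneg _) (S.vv_pos ⟨hτ.1, hτ.2.trans ht.2⟩ (le_of_lt hξ)).le

lemma energy_add_dissipation_coercive (hγ : 0 < γ) (hμ : 0 < μ) (hvm : 0 < vm)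
    (ht : t ∈ Set.Icc 0 S.T) :
    (∫ ξ in Set.Ioi (0 : ℝ), Phi γ (S.vv t ξ) (S.profile t ξ)) + nsq (px S.ψ t) +
        (∫ τ in (0 : ℝ)..t, ∫ ξ in Set.Ioi (0 : ℝ), S.dissipation τ ξ) ≤
      2 / min 1 μ * ((∫ ξ in Set.Ioi (0 : ℝ), S.energy t ξ) +
        μ / 2 * ∫ τ in (0 : ℝ)..t, ∫ ξ in Set.Ioi (0 : ℝ), S.dissipation τ ξ) := by
  rw [S.integral_energy hγ hvm ht, div_mul_eq_mul_div, le_div_iff₀ (lt_min one_pos hμ)]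
  have hPhi := S.integral_Phi_nonneg hγ hvm ht
  linarith [mul_le_mul_of_nonneg_left (min_le_left 1 μ) hPhi,
    mul_le_mul_of_nonneg_left (min_le_left 1 μ) (nsq_nonneg (px S.ψ t)),
    mul_le_mul_of_nonneg_left (min_le_right 1 μ) (S.integral_dissipation_nonneg ht)]

lemma integral_px_φ_sq_nonneg (ht : 0 ≤ t) :
    0 ≤ ∫ τ in (0 : ℝ)..t, ∫ ξ in Set.Ioi (0 : ℝ), px S.φ τ ξ ^ 2 :=
  intervalIntegral.integral_nonneg ht fun τ _ => nsq_nonneg (px S.φ τ)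

lemma energy_add_dissipation_le (hγ : 0 < γ) (hμ : 0 < μ) (hvm : 0 < vm)
    (ht : t ∈ Set.Icc 0 S.T) :
    (∫ ξ in Set.Ioi (0 : ℝ), S.energy t ξ) +
        μ / 2 * ∫ τ in (0 : ℝ)..t, ∫ ξ in Set.Ioi (0 : ℝ), S.dissipation τ ξ ≤
      (∫ ξ in Set.Ioi (0 : ℝ), Phi γ (S.vv 0 ξ) (S.profile 0 ξ)) + nsq (px S.ψ 0) +
        boundaryConstant γ vm vp C₀ K * exp (-(S.cm * S.β)) +
        sourceConstant γ μ vm vp C₀ * (S.δ ^ 2 * S.m ^ (γ + 2) *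
          ∫ τ in (0 : ℝ)..t, ∫ ξ in Set.Ioi (0 : ℝ), px S.φ τ ξ ^ 2) := by
  have hm := S.m_pos
  have hbalance := (S.dissipativeBalance hγ hμ hvm).integral_add_mul_le (half_pos hμ)
    (mul_nonneg (S.sourceConstant_nonneg hγ hμ) (by positivity)) ht
  rw [S.integral_energy hγ hvm (Set.left_mem_Icc.2 S.hTpos.le)] at hbalance
  linarith [S.neg_integral_energyFlux_boundary_le hγ hμ hvm ht, nsq_nonneg (px S.ψ 0)]

end EnergyEstimate

end NSSetting

theorem first_order_energy_estimate_general (γ μ vm vp C₀ K : ℝ) (hγ : 0 < γ) (hμ : 0 < μ)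
    (hvm : 0 < vm) :
    ∃ C > 0, ∀ S : NSSetting γ μ vm vp C₀ K,
      ∀ t : ℝ, 0 ≤ t → t ≤ S.T →
        (∫ ξ in Set.Ioi (0:ℝ), Phi γ (S.vv t ξ) (S.V (S.sh t ξ))) + nsq (px S.ψ t) +
            (∫ τ in (0:ℝ)..t, ∫ ξ in Set.Ioi (0:ℝ), (px (px S.ψ) τ ξ) ^ 2 / S.vv τ ξ) ≤
          C * ((∫ ξ in Set.Ioi (0:ℝ), Phi γ (S.vv 0 ξ) (S.V (S.sh 0 ξ))) + nsq (px S.ψ 0) +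
            Real.exp (-(S.cm * S.β)) +
            S.δ ^ 2 * S.m ^ (γ + 2) *
              ∫ τ in (0:ℝ)..t, ∫ ξ in Set.Ioi (0:ℝ), (px S.φ τ ξ) ^ 2) := by
  refine ⟨2 / min 1 μ * (1 + |NSSetting.boundaryConstant γ vm vp C₀ K| +
    |NSSetting.sourceConstant γ μ vm vp C₀|),
    mul_pos (div_pos two_pos (lt_min one_pos hμ)) (by positivity), fun S t ht0 htT => ?_⟩
  refine (S.energy_add_dissipation_coercive hγ hμ hvm ⟨ht0, htT⟩).trans ?_
  rw [mul_assoc]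
  gcongr
  refine (S.energy_add_dissipation_le hγ hμ hvm ⟨ht0, htT⟩).trans ?_
  have hm := S.m_pos
  have hinitial := add_nonneg (S.integral_Phi_nonneg hγ hvm (Set.left_mem_Icc.2 S.hTpos.le))
    (nsq_nonneg (px S.ψ 0))
  exact add_mul_add_mul_le hinitial (exp_pos _).le
    (mul_nonneg (by positivity) (S.integral_px_φ_sq_nonneg ht0))

/-- First-order energy estimate: `∫Φ(v,V)(t) + ‖ψ_ξ(t)‖² + ∫₀ᵗ∫ ψ_ξξ²/v` is controlled
by its initial value, `e^(−c₋β)` and `δ²m^(γ+2)∫₀ᵗ∫ φ_ξ²`. -/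
theorem first_order_energy_estimate (γ μ vm vp C₀ K : ℝ) (hγ : 1 < γ) (hμ : 0 < μ)
    (hvm : 0 < vm) (hv : vm < vp) (hC₀ : 0 < C₀) (hK : 0 < K) :
    ∃ C > 0, ∀ S : NSSetting γ μ vm vp C₀ K,
      ∀ t : ℝ, 0 ≤ t → t ≤ S.T →
        (∫ ξ in Set.Ioi (0:ℝ), Phi γ (S.vv t ξ) (S.V (S.sh t ξ))) + nsq (px S.ψ t) +
            (∫ τ in (0:ℝ)..t, ∫ ξ in Set.Ioi (0:ℝ), (px (px S.ψ) τ ξ) ^ 2 / S.vv τ ξ) ≤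
          C * ((∫ ξ in Set.Ioi (0:ℝ), Phi γ (S.vv 0 ξ) (S.V (S.sh 0 ξ))) + nsq (px S.ψ 0) +
            Real.exp (-(S.cm * S.β)) +
            S.δ ^ 2 * S.m ^ (γ + 2) *
              ∫ τ in (0:ℝ)..t, ∫ ξ in Set.Ioi (0:ℝ), (px S.φ τ ξ) ^ 2) := by
  exact first_order_energy_estimate_general γ μ vm vp C₀ K (one_pos.trans hγ) hμ hvm
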